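/- arXiv:2307.06002 — 8 statements merged into one kernel-verified Lean document; each statement's English description precedes it below -/
import Mathlib

section
/- Let Δ ∈ (0,1] and let L_Δ := 2ℤ ∪ (2ℤ + 2Δ/(1+Δ)) ⊂ ℝ. Then for every real s > 1, the energy per point E_sum(s,Δ) := (1/4) ∑_{k ∈ {0, 2Δ/(1+Δ)}} ∑_{p ∈ L_Δ, p ≠ k} |p − k|^{−s} is a convergent sum and equals 2^{−s} ζ(s) + 2^{−(s+1)} [ ζ(s, 1/(1+Δ)) + ζ(s, Δ/(1+Δ)) ]. -/
/-!
Put `a = Δ/(1+Δ) ∈ (0,1)`, so that `1 - a = 1/(1+Δ)` and `L_Δ = 2ℤ ∪ (2ℤ + 2a)`, a disjoint union.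
Splitting a coset `2ℤ + 2c` with `0 ≤ c ≤ 1` into its nonnegative and negative halves turns the sum
of `|p|^{-s}` over it into `2^{-s} (ζ(s,c) + ζ(s,1-c))` (`hasSum_coset`). With `c = 0` and `c = a`
this gives the sum seen from the origin (`hasSum_altLattice_zero`). The origin itself costs nothing
to include, because `0 ^ (-s) = 0` for real powers with `s ≠ 0`. The reflection `p ↦ 2a - p`
preserves `L_Δ` and exchanges the two base points `0` and `2a`, so the sum seen from `2a` is the
same (`hasSum_altLattice_shift`), and averaging gives the formula.
-/


open scoped BigOperators

/-- The alternating one-dimensional lattice `L_Δ = 2ℤ ∪ (2ℤ + 2Δ/(1+Δ))`. -/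
def altLattice (Δ : ℝ) : Set ℝ :=
  {x : ℝ | ∃ n : ℤ, x = 2 * n} ∪ {x : ℝ | ∃ n : ℤ, x = 2 * n + 2 * Δ / (1 + Δ)}

lemma summable_nat_add_rpow (c : ℝ) (hc : 0 ≤ c) (s : ℝ) (hs : 1 < s) :
    Summable (fun n : ℕ => ((n : ℝ) + c) ^ (-s)) := by
  refine ((Real.summable_one_div_nat_add_rpow c s).2 hs).congr fun n => ?_
  have h : 0 ≤ (n : ℝ) + c := by positivity
  rw [abs_of_nonneg h, Real.rpow_neg h, one_div]

/-- The sum of `|p|^{-s}` over the coset `2ℤ + 2c`, the two halves of which are Hurwitz zeta sums.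
For `c = 0` the term `n = 0` of the first sum is the junk value `0 ^ (-s) = 0`, and likewise for
`c = 1` in the second sum. -/
lemma hasSum_coset (c : ℝ) (hc0 : 0 ≤ c) (hc1 : c ≤ 1) (s : ℝ) (hs : 1 < s) :
    HasSum (fun n : ℤ => |2 * (n : ℝ) + 2 * c| ^ (-s))
      (2 ^ (-s) * (∑' n : ℕ, ((n : ℝ) + c) ^ (-s))
        + 2 ^ (-s) * ∑' n : ℕ, ((n : ℝ) + (1 - c)) ^ (-s)) := by
  have h1 := (summable_nat_add_rpow c hc0 s hs).hasSum.mul_left ((2 : ℝ) ^ (-s))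
  have h2 := (summable_nat_add_rpow (1 - c) (by linarith) s hs).hasSum.mul_left ((2 : ℝ) ^ (-s))
  refine HasSum.of_nat_of_neg_add_one (h1.congr_fun fun n => ?_) (h2.congr_fun fun n => ?_)
  · have h : 0 ≤ (n : ℝ) + c := by positivity
    rw [← Real.mul_rpow (by norm_num) h]
    congr 1
    rw [Int.cast_natCast, abs_of_nonneg (by linarith)]
    ring
  · have h : 0 ≤ (n : ℝ) + (1 - c) := by
      have : (0 : ℝ) ≤ n := n.cast_nonneg
      linarith
    rw [← Real.mul_rpow (by norm_num) h]
    congr 1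
    push_cast
    rw [abs_of_nonpos (by linarith)]
    ring

lemma hasSum_two_mul_int (s : ℝ) (hs : 1 < s) :
    HasSum (fun n : ℤ => |2 * (n : ℝ)| ^ (-s))
      (2 * (2 ^ (-s) * ∑' n : ℕ, ((n : ℝ) + 1) ^ (-s))) := by
  have h := hasSum_coset 0 le_rfl zero_le_one s hs
  have h0 := (summable_nat_add_rpow 0 le_rfl s hs).tsum_eq_zero_add
  have hz : (0 : ℝ) ^ (-s) = 0 := Real.zero_rpow (by linarith)
  simp only [Nat.cast_zero, Nat.cast_add, Nat.cast_one, add_zero, hz, zero_add] at h0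
  simp only [mul_zero, add_zero, sub_zero, h0] at h
  rwa [two_mul]

/-- The sum of `|p|^{-s}` over the nonzero points of `L_Δ`. -/
lemma hasSum_altLattice_zero (Δ : ℝ) (hΔ : 0 < Δ) (s : ℝ) (hs : 1 < s) :
    HasSum (fun p : {p : ℝ // p ∈ altLattice Δ ∧ p ≠ 0} => |(p : ℝ) - 0| ^ (-s))
      (2 * (2 ^ (-s) * ∑' n : ℕ, ((n : ℝ) + 1) ^ (-s))
        + (2 ^ (-s) * (∑' n : ℕ, ((n : ℝ) + Δ / (1 + Δ)) ^ (-s))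
          + 2 ^ (-s) * ∑' n : ℕ, ((n : ℝ) + 1 / (1 + Δ)) ^ (-s))) := by
  have hD : 0 < 1 + Δ := by linarith
  have ha0 : 0 < Δ / (1 + Δ) := by positivity
  have ha1 : Δ / (1 + Δ) < 1 := by rw [div_lt_one hD]; linarith
  have hsub : 1 - Δ / (1 + Δ) = 1 / (1 + Δ) := by field_simp; ring
  have h2 := hasSum_coset _ ha0.le ha1.le s hs
  rw [hsub] at h2
  have h1 := hasSum_two_mul_int s hs
  have e : 2 * Δ / (1 + Δ) = 2 * (Δ / (1 + Δ)) := by ring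
  generalize Δ / (1 + Δ) = a at *
  let f : ℝ → ℝ := fun p => |p| ^ (-s)
  have i1 : Function.Injective (fun n : ℤ => 2 * (n : ℝ)) := fun m n h => by simpa using h
  have i2 : Function.Injective (fun n : ℤ => 2 * (n : ℝ) + 2 * a) := fun m n h => by simpa using h
  have r1 := (i1.hasSum_range_iff (f := f)).2 h1
  have r2 := (i2.hasSum_range_iff (f := f)).2 h2
  have hdis : Disjoint (Set.range fun n : ℤ => 2 * (n : ℝ))
      (Set.range fun n : ℤ => 2 * (n : ℝ) + 2 * a) := by
    rw [Set.disjoint_left]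
    rintro _ ⟨m, rfl⟩ ⟨n, h⟩
    have h' : (m : ℝ) - n = a := by simp only at h; linarith
    have l : (0 : ℝ) < ((m - n : ℤ) : ℝ) := by push_cast; linarith
    have u : ((m - n : ℤ) : ℝ) < ((1 : ℤ) : ℝ) := by push_cast; linarith
    have l' : 0 < m - n := by exact_mod_cast l
    have u' : m - n < 1 := by exact_mod_cast u
    omega
  have hU := hasSum_subtype_iff_indicator.1 (HasSum.add_disjoint (f := f) hdis r1 r2)
  have hT : {p : ℝ | p ∈ altLattice Δ ∧ p ≠ 0}.indicator f =
      ((Set.range fun n : ℤ => 2 * (n : ℝ)) ∪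
        Set.range fun n : ℤ => 2 * (n : ℝ) + 2 * a).indicator f := by
    -- Dropping the origin does not change the indicator, since `f 0 = 0`.
    ext p
    have hmem : p ∈ altLattice Δ ↔ p ∈ (Set.range fun n : ℤ => 2 * (n : ℝ)) ∪
        Set.range fun n : ℤ => 2 * (n : ℝ) + 2 * a := by
      simp only [altLattice, e, Set.mem_union, Set.mem_ofPred_eq, Set.mem_range, eq_comm]
    by_cases hp : p = 0
    · have hf : f p = 0 := by
        simp only [f, hp, abs_zero]
        exact Real.zero_rpow (by linarith)
      rw [Set.indicator_apply_eq_zero.2 fun _ => hf, Set.indicator_apply_eq_zero.2 fun _ => hf]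
    · by_cases h : p ∈ altLattice Δ
      · rw [Set.indicator_of_mem (hmem.1 h), Set.indicator_of_mem (Set.mem_ofPred_eq ▸ ⟨h, hp⟩)]
      · rw [Set.indicator_of_notMem (mt hmem.2 h), Set.indicator_of_notMem fun h' => h h'.1]
  rw [← hT] at hU
  simp only [sub_zero]
  exact (hasSum_subtype_iff_indicator (f := f)).2 hU

lemma reflect_mem_altLattice (Δ p : ℝ) (hp : p ∈ altLattice Δ) :
    2 * Δ / (1 + Δ) - p ∈ altLattice Δ := by
  rcases hp with ⟨n, rfl⟩ | ⟨n, rfl⟩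
  · exact Or.inr ⟨-n, by push_cast; ring⟩
  · exact Or.inl ⟨-n, by push_cast; ring⟩

/-- The reflection `p ↦ 2Δ/(1+Δ) - p` as a bijection from `L_Δ` without `2Δ/(1+Δ)` to `L_Δ`
without `0`. -/
noncomputable def reflectEquiv (Δ : ℝ) : {p : ℝ // p ∈ altLattice Δ ∧ p ≠ 2 * Δ / (1 + Δ)} ≃
    {p : ℝ // p ∈ altLattice Δ ∧ p ≠ 0} where
  toFun p := ⟨2 * Δ / (1 + Δ) - p, reflect_mem_altLattice Δ p p.2.1,
    fun h => p.2.2 (sub_eq_zero.1 h).symm⟩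
  invFun p := ⟨2 * Δ / (1 + Δ) - p, reflect_mem_altLattice Δ p p.2.1,
    fun h => p.2.2 (by linarith)⟩
  left_inv p := Subtype.ext (sub_sub_cancel _ _)
  right_inv p := Subtype.ext (sub_sub_cancel _ _)

lemma hasSum_altLattice_shift (Δ s S : ℝ)
    (h : HasSum (fun p : {p : ℝ // p ∈ altLattice Δ ∧ p ≠ 0} => |(p : ℝ) - 0| ^ (-s)) S) :
    HasSum (fun p : {p : ℝ // p ∈ altLattice Δ ∧ p ≠ 2 * Δ / (1 + Δ)} =>
      |(p : ℝ) - 2 * Δ / (1 + Δ)| ^ (-s)) S := by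
  refine ((reflectEquiv Δ).hasSum_iff.2 h).congr_fun fun p => ?_
  simp only [Function.comp_apply, reflectEquiv, Equiv.coe_fn_mk, sub_zero]
  rw [abs_sub_comm]

/-- For `Δ ∈ (0,1]` and real `s > 1`, the energy per point
`E_sum(s,Δ) = (1/4) ∑_{k ∈ {0, 2Δ/(1+Δ)}} ∑_{p ∈ L_Δ, p ≠ k} |p − k|^{−s}`
is a convergent sum and equals
`2^{−s} ζ(s) + 2^{−(s+1)} [ζ(s, 1/(1+Δ)) + ζ(s, Δ/(1+Δ))]`. -/
theorem energy_eq_zeta_combination (Δ : ℝ) (hΔ : Δ ∈ Set.Ioc (0 : ℝ) 1)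
    (s : ℝ) (hs : 1 < s) :
    (∀ k ∈ ({0, 2 * Δ / (1 + Δ)} : Finset ℝ),
      Summable (fun p : {p : ℝ // p ∈ altLattice Δ ∧ p ≠ k} => |(p : ℝ) - k| ^ (-s))) ∧
    (1 / 4) * ∑ k ∈ ({0, 2 * Δ / (1 + Δ)} : Finset ℝ),
        ∑' p : {p : ℝ // p ∈ altLattice Δ ∧ p ≠ k}, |(p : ℝ) - k| ^ (-s)
      = 2 ^ (-s) * (∑' n : ℕ, ((n : ℝ) + 1) ^ (-s))
        + 2 ^ (-(s + 1)) * ((∑' n : ℕ, ((n : ℝ) + 1 / (1 + Δ)) ^ (-s))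
          + ∑' n : ℕ, ((n : ℝ) + Δ / (1 + Δ)) ^ (-s)) := by
  have h0 := hasSum_altLattice_zero Δ hΔ.1 s hs
  have h1 := hasSum_altLattice_shift Δ s _ h0
  have hne : (0 : ℝ) ≠ 2 * Δ / (1 + Δ) := by
    have := hΔ.1
    positivity
  refine ⟨fun k hk => ?_, ?_⟩
  · rcases Finset.mem_insert.1 hk with rfl | hk
    · exact h0.summable
    · obtain rfl := Finset.mem_singleton.1 hk
      exact h1.summable
  · rw [Finset.sum_pair hne, h0.tsum_eq, h1.tsum_eq]
    have h2 : (2 : ℝ) ^ (-(s + 1)) = 2 ^ (-s) / 2 := by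
      rw [neg_add, ← sub_eq_add_neg, Real.rpow_sub_one (by norm_num)]
    rw [h2]
    ring
end

section
/- Let Δ ∈ (0,1] and let s ∈ ℂ with 0 < Re(s) < 1. Then π^{−s/2} Γ(s/2) E(s,Δ) = 2^{−(s+1)} { ∫₀^∞ [θ(1/(1+Δ), it) − 1] t^{−(1+s)/2} dt + ∫₀^∞ [θ(0, it) − 1 − t^{−1/2}] t^{s/2 − 1} dt }, where θ(z, it) := ∑_{n ∈ ℤ} e^{−π n² t} e^{2πinz} is the Jacobi theta function (t > 0, z ∈ ℂ), and both integrals converge. -/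
/-!
Write `a = 1 / (1 + Δ)`. Since `Δ / (1 + Δ) = 1 - a ≡ -a (mod 1)`, the odd parts of the two Hurwitz
zeta values cancel, so multiplying `E(s, Δ)` by `π^{-s/2} Γ(s/2)` gives
`2^{-(s+1)} (2 Z(s) + 2 Z_a(s))`, where `Z` is the completed Riemann zeta function and `Z_a` the
completed even Hurwitz zeta function (`completed_latticeEnergy`). By the functional equation,
`Z_a(s)` is the completed cosine zeta function of `a` at `1 - s`.

Mathlib defines these completed functions through Mellin transforms of theta functions, but
identifies them with the Mellin transform of `f - f₀` only to the right of the critical strip.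
The analytic content here is the corresponding formula inside the strip, for an arbitrary
`WeakFEPair` (`WeakFEPair.hasMellin_strip`): for `0 < Re s < k` the Mellin transform of
`f(t) - f₀ - ε g₀ t^{-k}` converges and equals `Λ(s)`. This function is Mathlib's modified
function `f_modif` minus `f₀` on `(0, 1)` and minus `ε g₀ t^{-k}` on `(1, ∞)`. These two pieces have
Mellin transforms `f₀ / s` and `ε g₀ / (k - s)`, exactly the terms relating `Λ₀` and `Λ`. The
formula is applied to the pair for `ζ` (with `f₀ = g₀ = 1`), and to the cosine pair for
`a ≢ 0 (mod 1)` (with `f₀ = 1`, `g₀ = 0`).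
-/


open Complex HurwitzZeta MeasureTheory

/-- The lattice energy `E(s,Δ)` built from the analytically continued Riemann and
Hurwitz zeta functions. -/
noncomputable def latticeEnergy (s : ℂ) (Δ : ℝ) : ℂ :=
  2 ^ (-s) * riemannZeta s +
    2 ^ (-(s + 1)) * (hurwitzZeta (↑(1 / (1 + Δ)) : UnitAddCircle) s +
      hurwitzZeta (↑(Δ / (1 + Δ)) : UnitAddCircle) s)

/-- The Jacobi theta function `θ(z, it) = ∑_{n ∈ ℤ} e^{−π n² t} e^{2πinz}` for `t > 0`. -/
noncomputable def thetaIt (z : ℂ) (t : ℝ) : ℂ :=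
  ∑' n : ℤ, Complex.exp (-Real.pi * (n : ℂ) ^ 2 * t) * Complex.exp (2 * Real.pi * Complex.I * n * z)

section Strip

open Set

lemma hasMellin_cpow_neg_Ioi_one {k s : ℂ} (hs : s.re < k.re) :
    HasMellin ((Ioi (1 : ℝ)).indicator fun t : ℝ ↦ (t : ℂ) ^ (-k)) s (1 / (k - s)) := by
  have hre : (s - 1 - k).re < -1 := by simp; linarith
  have heq : ∀ t ∈ Ioi (1 : ℝ),
      (t : ℂ) ^ (s - 1) • (t : ℂ) ^ (-k) = (t : ℂ) ^ (s - 1 - k) := fun t ht ↦ by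
    rw [smul_eq_mul, ← cpow_add _ _ (ofReal_ne_zero.mpr (zero_lt_one.trans ht).ne'),
      ← sub_eq_add_neg]
  have hsub : Ioi (0 : ℝ) ∩ Ioi 1 = Ioi 1 := inter_eq_right.mpr (Ioi_subset_Ioi zero_le_one)
  simp_rw [HasMellin, MellinConvergent, mellin, ← indicator_smul]
  refine ⟨?_, ?_⟩
  · rw [IntegrableOn, integrable_indicator_iff measurableSet_Ioi, IntegrableOn,
      Measure.restrict_restrict measurableSet_Ioi, inter_comm, hsub]
    exact (integrableOn_Ioi_cpow_of_lt hre zero_lt_one).congr_fun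
      (fun t ht ↦ (heq t ht).symm) measurableSet_Ioi
  · rw [setIntegral_indicator measurableSet_Ioi, hsub, setIntegral_congr_fun measurableSet_Ioi heq,
      integral_Ioi_cpow_of_lt hre zero_lt_one, ofReal_one, one_cpow,
      show s - 1 - k + 1 = -(k - s) by ring, neg_div_neg_eq]

/-- Inside the strip `0 < Re s < k`, the function `Λ` of a weak FE-pair is the Mellin transform of
`f` with its leading terms at both `∞` and `0` removed. -/
theorem WeakFEPair.hasMellin_strip (P : WeakFEPair ℂ) {s : ℂ} (hs0 : 0 < s.re) (hs : s.re < P.k) :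
    HasMellin (fun t : ℝ ↦ P.f t - P.f₀ - P.ε * P.g₀ * (t : ℂ) ^ (-(P.k : ℂ))) s (P.Λ s) := by
  have h0 : HasMellin P.f_modif s (P.Λ₀ s) :=
    ⟨(P.isStrongFEPair_toStrongFEPair.hasMellin s).1, rfl⟩
  have h1 : HasMellin ((Ioc (0 : ℝ) 1).indicator fun _ ↦ (1 : ℂ)) s (1 / s) :=
    hasMellin_one_Ioc hs0
  have h2 := hasMellin_cpow_neg_Ioi_one (k := P.k) (s := s) (by simpa using hs)
  have h1' := hasMellin_const_smul h1.1 P.f₀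
  have h2' := hasMellin_const_smul h2.1 (P.ε * P.g₀)
  have h3 := hasMellin_sub h0.1 h1'.1
  have h4 := hasMellin_sub h3.1 h2'.1
  have hae : ∀ᵐ t : ℝ, t ∈ Ioi (0 : ℝ) →
      (t : ℂ) ^ (s - 1) • (P.f_modif t - P.f₀ • (Ioc (0 : ℝ) 1).indicator (fun _ ↦ (1 : ℂ)) t -
        (P.ε * P.g₀) • (Ioi (1 : ℝ)).indicator (fun t : ℝ ↦ (t : ℂ) ^ (-(P.k : ℂ))) t) =
      (t : ℂ) ^ (s - 1) • (P.f t - P.f₀ - P.ε * P.g₀ * (t : ℂ) ^ (-(P.k : ℂ))) := by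
    -- `f_modif` is defined to vanish at `t = 1`, where the identity may fail
    filter_upwards [compl_mem_ae_iff.mpr (measure_singleton (1 : ℝ))] with t ht1 (ht0 : 0 < t)
    congr 1
    rcases lt_or_gt_of_ne (show t ≠ 1 from ht1) with h | h
    · have ha : t ∈ Ioo (0 : ℝ) 1 := ⟨ht0, h⟩
      have hb : t ∈ Ioc (0 : ℝ) 1 := ⟨ht0, h.le⟩
      have hc : t ∉ Ioi (1 : ℝ) := not_lt.mpr h.le
      simp only [WeakFEPair.f_modif, Pi.add_apply, indicator_of_mem ha, indicator_of_mem hb,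
        indicator_of_notMem hc, smul_eq_mul, ofReal_cpow ht0.le, ofReal_neg]
      ring
    · have ha : t ∉ Ioo (0 : ℝ) 1 := fun h' ↦ h'.2.not_gt h
      have hb : t ∉ Ioc (0 : ℝ) 1 := fun h' ↦ h'.2.not_gt h
      have hc : t ∈ Ioi (1 : ℝ) := h
      simp only [WeakFEPair.f_modif, Pi.add_apply, indicator_of_notMem ha, indicator_of_notMem hb,
        indicator_of_mem hc, smul_eq_mul]
      ring
  refine ⟨Integrable.congr h4.1 ((ae_restrict_iff' measurableSet_Ioi).mpr hae), ?_⟩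
  rw [mellin, ← setIntegral_congr_ae measurableSet_Ioi hae]
  refine h4.2.trans ?_
  rw [h3.2, h1'.2, h2'.2, h0.2, h1.2, h2.2, WeakFEPair.Λ]
  simp only [smul_eq_mul]
  ring

end Strip

lemma thetaIt_ofReal (a : ℝ) {t : ℝ} (ht : 0 < t) :
    thetaIt (a : ℂ) t = cosKernel (a : UnitAddCircle) t := by
  rw [← (hasSum_int_cosKernel a ht).tsum_eq, thetaIt]
  refine tsum_congr fun n ↦ ?_
  rw [mul_comm]
  push_cast
  ring_nf

lemma thetaIt_zero {t : ℝ} (ht : 0 < t) :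
    thetaIt 0 t = evenKernel (0 : UnitAddCircle) t := by
  rw [evenKernel_eq_cosKernel_of_zero]
  exact_mod_cast thetaIt_ofReal 0 ht

/-- The completed lattice energy in terms of the functions `Λ` of the FE-pairs attached to `ζ` and
to the cosine zeta function. -/
lemma completed_latticeEnergy {Δ : ℝ} (hΔ : 0 < Δ) {s : ℂ} (hs : 0 < s.re) :
    (Real.pi : ℂ) ^ (-s / 2) * Complex.Gamma (s / 2) * latticeEnergy s Δ = 2 ^ (-(s + 1)) *
      ((hurwitzEvenFEPair ↑(1 / (1 + Δ))).symm.Λ ((1 - s) / 2) +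
        (hurwitzEvenFEPair 0).Λ (s / 2)) := by
  have hs0 : s ≠ 0 := fun h ↦ by simp [h] at hs
  have hG : Gammaℝ s ≠ 0 := Gammaℝ_ne_zero_of_re_pos hs
  have hneg : ((Δ / (1 + Δ) : ℝ) : UnitAddCircle) = -((1 / (1 + Δ) : ℝ) : UnitAddCircle) := by
    rw [show Δ / (1 + Δ) = 1 + -(1 / (1 + Δ)) by field_simp; ring, AddCircle.coe_add,
      AddCircle.coe_period, zero_add, AddCircle.coe_neg]
  have hadd (a : UnitAddCircle) :
      hurwitzZeta a s + hurwitzZeta (-a) s = 2 * hurwitzZetaEven a s := by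
    rw [hurwitzZetaEven_eq, mul_div_cancel₀ _ two_ne_zero]
  have hpow : (2 : ℂ) ^ (-s) = 2 ^ (-(s + 1)) * 2 := by
    rw [show -s = -(s + 1) + 1 by ring, cpow_add _ _ two_ne_zero, cpow_one]
  rw [latticeEnergy, hneg, hadd, ← hurwitzZetaEven_zero,
    hurwitzZetaEven_def_of_ne_or_ne (.inr hs0), hurwitzZetaEven_def_of_ne_or_ne (.inr hs0),
    ← completedCosZeta_one_sub ↑(1 / (1 + Δ)), hpow, completedHurwitzZetaEven, completedCosZeta, ← Gammaℝ_def]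
  field_simp
  ring

/-- For `Δ ∈ (0,1]` and `0 < Re(s) < 1`,
`π^{−s/2} Γ(s/2) E(s,Δ)` equals `2^{−(s+1)}` times the sum of the two (convergent)
theta-integrals. -/
theorem latticeEnergy_theta_integral_rep (Δ : ℝ) (hΔ : Δ ∈ Set.Ioc (0 : ℝ) 1)
    (s : ℂ) (hs0 : 0 < s.re) (hs1 : s.re < 1) :
    IntegrableOn
      (fun t : ℝ => (thetaIt (1 / (1 + Δ) : ℝ) t - 1) * (t : ℂ) ^ ((-1 - s) / 2))
      (Set.Ioi 0) ∧
    IntegrableOn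
      (fun t : ℝ => (thetaIt 0 t - 1 - (t : ℂ) ^ (-(1 / 2 : ℂ))) * (t : ℂ) ^ (s / 2 - 1))
      (Set.Ioi 0) ∧
    (Real.pi : ℂ) ^ (-s / 2) * Complex.Gamma (s / 2) * latticeEnergy s Δ
      = 2 ^ (-(s + 1)) *
        ((∫ t in Set.Ioi (0 : ℝ), (thetaIt (1 / (1 + Δ) : ℝ) t - 1) * (t : ℂ) ^ ((-1 - s) / 2))
          + ∫ t in Set.Ioi (0 : ℝ),
              (thetaIt 0 t - 1 - (t : ℂ) ^ (-(1 / 2 : ℂ))) * (t : ℂ) ^ (s / 2 - 1)) := by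
  have hΔ0 : 0 < Δ := hΔ.1
  -- the cosine pair has `g₀ = 0`, since `1 / (1 + Δ)` is not an integer
  have ha0 : ((1 / (1 + Δ) : ℝ) : UnitAddCircle) ≠ 0 := by
    have h1 : 0 < 1 / (1 + Δ) := by positivity
    have h2 : 1 / (1 + Δ) < 1 := (div_lt_one (by linarith)).mpr (by linarith)
    exact fun h ↦ h1.ne' ((AddCircle.coe_eq_zero_iff_of_mem_Ico ⟨h1.le, h2⟩).mp h)
  obtain ⟨hA, hA'⟩ := (hurwitzEvenFEPair ↑(1 / (1 + Δ))).symm.hasMellin_strip (s := (1 - s) / 2)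
    (by simp; linarith) (by simp [hurwitzEvenFEPair]; linarith)
  obtain ⟨hB, hB'⟩ := (hurwitzEvenFEPair 0).hasMellin_strip (s := s / 2)
    (by simp; linarith) (by simp [hurwitzEvenFEPair]; linarith)
  have eA : Set.EqOn (fun t : ℝ ↦ (t : ℂ) ^ ((1 - s) / 2 - 1) •
      ((hurwitzEvenFEPair ↑(1 / (1 + Δ))).symm.f t - (hurwitzEvenFEPair ↑(1 / (1 + Δ))).symm.f₀ -
        (hurwitzEvenFEPair ↑(1 / (1 + Δ))).symm.ε * (hurwitzEvenFEPair ↑(1 / (1 + Δ))).symm.g₀ *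
          (t : ℂ) ^ (-((hurwitzEvenFEPair ↑(1 / (1 + Δ))).symm.k : ℂ))))
      (fun t : ℝ ↦ (thetaIt (1 / (1 + Δ) : ℝ) t - 1) * (t : ℂ) ^ ((-1 - s) / 2))
      (Set.Ioi 0) := fun t ht ↦ by
    simp only [thetaIt_ofReal _ ht]
    simp only [hurwitzEvenFEPair, WeakFEPair.symm, if_neg ha0, Function.comp_apply, smul_eq_mul]
    rw [show (1 - s) / 2 - 1 = (-1 - s) / 2 by ring]
    ring
  have eB : Set.EqOn (fun t : ℝ ↦ (t : ℂ) ^ (s / 2 - 1) •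
      ((hurwitzEvenFEPair 0).f t - (hurwitzEvenFEPair 0).f₀ -
        (hurwitzEvenFEPair 0).ε * (hurwitzEvenFEPair 0).g₀ *
          (t : ℂ) ^ (-((hurwitzEvenFEPair 0).k : ℂ))))
      (fun t : ℝ ↦ (thetaIt 0 t - 1 - (t : ℂ) ^ (-(1 / 2 : ℂ))) * (t : ℂ) ^ (s / 2 - 1))
      (Set.Ioi 0) := fun t ht ↦ by
    simp only [thetaIt_zero ht]
    simp only [hurwitzEvenFEPair, if_true, Function.comp_apply, smul_eq_mul]
    push_cast
    ring
  refine ⟨hA.congr_fun eA measurableSet_Ioi, hB.congr_fun eB measurableSet_Ioi, ?_⟩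
  rw [completed_latticeEnergy hΔ0 hs0, ← hA', ← hB', mellin, mellin,
    setIntegral_congr_fun measurableSet_Ioi eA, setIntegral_congr_fun measurableSet_Ioi eB]
end

section
/- Let ρ ∈ ℂ with ρ ≠ 1. Then E(ρ, 1/2) = 0 if and only if ζ(ρ) = 0 or there exists k ∈ ℤ such that ρ = (2k+1)πi / ln 3. -/
/-!
The points `1/3` and `2/3` of the circle are the two residue classes mod `3` prime to `3`. So
`ζ(s, 1/3) + ζ(s, 2/3)` is `3 ^ s` times the `L`-function of the trivial Dirichlet character mod `3`,
which is `ζ(s)` without its Euler factor at `3`: the sum equals `(3 ^ s - 1) ζ(s)`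
(`hurwitzZeta_third_add`). Hence `E(s, 1/2) = 2 ^ (-(s + 1)) (3 ^ s + 1) ζ(s)`
(`latticeEnergy_half`), and the extra zeros are the solutions of `3 ^ s = -1`
(`three_cpow_eq_neg_one_iff`).
-/

open Complex HurwitzZeta

theorem hurwitzZeta_third_add {s : ℂ} (hs : s ≠ 1) :
    hurwitzZeta (↑(2 / 3 : ℝ) : UnitAddCircle) s + hurwitzZeta (↑(1 / 3 : ℝ) : UnitAddCircle) s
      = (3 ^ s - 1) * riemannZeta s := by
  have h := DirichletCharacter.LFunctionTrivChar_eq_mul_riemannZeta (N := 3) hs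
  rw [Nat.Prime.primeFactors Nat.prime_three, Finset.prod_singleton,
    DirichletCharacter.LFunctionTrivChar, DirichletCharacter.LFunction, ZMod.LFunction] at h
  have h1 : ZMod.toAddCircle (1 : ZMod 3) = (↑(1 / 3 : ℝ) : UnitAddCircle) := by
    simpa using ZMod.toAddCircle_natCast (N := 3) 1
  have h2 : ZMod.toAddCircle (2 : ZMod 3) = (↑(2 / 3 : ℝ) : UnitAddCircle) := by
    simpa using ZMod.toAddCircle_natCast (N := 3) 2
  have e : ∀ f : ZMod 3 → ℂ, ∑ j, f j = f 0 + f 1 + f 2 := Fin.sum_univ_three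
  have u2 : IsUnit (2 : ZMod 3) := by decide
  have u0 : ¬ IsUnit (0 : ZMod 3) := not_isUnit_zero
  rw [e, MulChar.map_nonunit _ u0, MulChar.one_apply isUnit_one, MulChar.one_apply u2, h1, h2] at h
  push_cast at h
  have h3 : (3 : ℂ) ^ s ≠ 0 := by simp [Complex.cpow_eq_zero_iff]
  rw [Complex.cpow_neg] at h
  field_simp at h
  linear_combination h

/-- The factorization of the energy at `Δ = 1/2`. -/
theorem latticeEnergy_half {s : ℂ} (hs : s ≠ 1) :
    latticeEnergy s (1 / 2) = 2 ^ (-(s + 1)) * (3 ^ s + 1) * riemannZeta s := by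
  have h2 : (2 : ℂ) ^ (-s) = 2 * 2 ^ (-(s + 1)) := by
    rw [show -s = 1 + -(s + 1) by ring, Complex.cpow_add _ _ two_ne_zero, Complex.cpow_one]
  rw [latticeEnergy, show (1 / (1 + 1 / 2) : ℝ) = 2 / 3 by norm_num,
    show (1 / 2 / (1 + 1 / 2) : ℝ) = 1 / 3 by norm_num, hurwitzZeta_third_add hs, h2]
  ring

theorem three_cpow_eq_neg_one_iff (s : ℂ) :
    (3 : ℂ) ^ s = -1 ↔ ∃ k : ℤ, s = (2 * k + 1) * Real.pi * Complex.I / Real.log 3 := by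
  have hl : (Real.log 3 : ℂ) ≠ 0 := by
    exact_mod_cast (Real.log_pos (by norm_num)).ne'
  have hlog : Complex.log 3 = (Real.log 3 : ℂ) := by
    simp
  rw [Complex.cpow_def_of_ne_zero (by norm_num), hlog, ← Complex.exp_pi_mul_I,
    Complex.exp_eq_exp_iff_exists_int]
  refine exists_congr fun k => ?_
  rw [eq_div_iff hl, mul_comm s]
  constructor <;> intro h <;> linear_combination h

/-- For `ρ ≠ 1`, `E(ρ, 1/2) = 0` iff `ζ(ρ) = 0` or
`ρ = (2k+1)πi/ln 3` for some `k ∈ ℤ`. -/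
theorem latticeEnergy_half_zeros (ρ : ℂ) (hρ : ρ ≠ 1) :
    latticeEnergy ρ (1 / 2) = 0 ↔
      riemannZeta ρ = 0 ∨
        ∃ k : ℤ, ρ = (2 * k + 1) * Real.pi * Complex.I / Real.log 3 := by
  have h2 : (2 : ℂ) ^ (-(ρ + 1)) ≠ 0 := by simp [Complex.cpow_eq_zero_iff]
  rw [latticeEnergy_half hρ, mul_eq_zero, mul_eq_zero, or_iff_right h2, or_comm,
    add_eq_zero_iff_eq_neg, three_cpow_eq_neg_one_iff]
end

section
/- Let ρ ∈ ℂ with ρ ≠ 1. Then E(ρ, 1/3) = 0 if and only if ζ(ρ) = 0 or there exists k ∈ ℤ such that ρ = (1/ln 2)[ Log((1 + i√7)/2) + 2πik ] or ρ = (1/ln 2)[ Log((1 − i√7)/2) + 2πik ], where Log denotes the principal branch of the complex logarithm. -/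
/-!
The residues prime to `4` are `1` and `3`, so `4 ^ (-s) * (ζ(s, 1/4) + ζ(s, 3/4))` is the
L-function of the trivial character modulo `4`, namely `(1 - 2 ^ (-s)) * ζ(s)`
(`hurwitzZeta_three_quarters_add_quarter`). Hence, with `x = 2 ^ s`, the energy
`E(s, 1/3)` factors as `ζ(s) * (x ^ 2 - x + 2) / (2 * x)` (`latticeEnergy_third`). The factor
`x ^ 2 - x + 2` vanishes exactly when `x = (1 ± i√7) / 2`, and solving `2 ^ s = w` for `s`
gives all the branches of `log w / log 2` (`two_cpow_eq_iff`).
-/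

open Complex HurwitzZeta

/-- The sum is `4 ^ s` times the L-function of the trivial character modulo `4`, whose values
are `0` at the residues `0, 2` and `1` at `1, 3`. -/
theorem hurwitzZeta_three_quarters_add_quarter {s : ℂ} (hs : s ≠ 1) :
    hurwitzZeta (↑(3 / 4 : ℝ) : UnitAddCircle) s + hurwitzZeta (↑(1 / 4 : ℝ) : UnitAddCircle) s =
      ((2 ^ s) ^ 2 - 2 ^ s) * riemannZeta s := by
  have h := DirichletCharacter.LFunctionTrivChar_eq_mul_riemannZeta (N := 4) hs
  have hpf : Nat.primeFactors 4 = {2} := by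
    rw [show 4 = 2 ^ 2 by norm_num]
    exact Nat.primeFactors_prime_pow (by norm_num) Nat.prime_two
  rw [hpf, Finset.prod_singleton] at h
  have h0 : ¬ IsUnit (0 : ZMod 4) := by decide
  have h1 : IsUnit (1 : ZMod 4) := by decide
  have h2 : ¬ IsUnit (2 : ZMod 4) := by decide
  have h3 : IsUnit (3 : ZMod 4) := by decide
  have hv1 : (1 : ZMod 4).val = 1 := by decide
  have hv3 : (3 : ZMod 4).val = 3 := by decide
  have hsum : DirichletCharacter.LFunctionTrivChar 4 s =
      4 ^ (-s) * (hurwitzZeta (↑(1 / 4 : ℝ) : UnitAddCircle) s +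
        hurwitzZeta (↑(3 / 4 : ℝ) : UnitAddCircle) s) := by
    have hu : (Finset.univ : Finset (ZMod 4)) = {0, 1, 2, 3} := by decide
    rw [DirichletCharacter.LFunctionTrivChar, DirichletCharacter.LFunction, ZMod.LFunction, hu,
      Finset.sum_insert (by decide), Finset.sum_insert (by decide),
      Finset.sum_insert (by decide), Finset.sum_singleton,
      MulChar.map_nonunit _ h0, MulChar.map_nonunit _ h2, MulChar.one_apply h1,
      MulChar.one_apply h3, ZMod.toAddCircle_apply, ZMod.toAddCircle_apply,
      ZMod.toAddCircle_apply, ZMod.toAddCircle_apply, hv1, hv3]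
    norm_num
  rw [hsum] at h
  have h4 : (4 : ℂ) ^ (-s) = ((2 ^ s) ^ 2)⁻¹ := by
    rw [cpow_neg, ← cpow_nat_mul, show (4 : ℂ) = ((2 : ℝ) : ℂ) * ((2 : ℝ) : ℂ) by norm_num,
      mul_cpow_ofReal_nonneg (by norm_num) (by norm_num), Nat.cast_ofNat, two_mul,
      cpow_add _ _ two_ne_zero, ofReal_ofNat]
  have hx : (2 : ℂ) ^ s ≠ 0 := by simp [cpow_eq_zero_iff]
  rw [h4, Nat.cast_ofNat, cpow_neg] at h
  field_simp at h
  linear_combination h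

/-- Factorisation at `Δ = 1/3`, where `1 / (1 + Δ) = 3/4` and `Δ / (1 + Δ) = 1/4`. -/
theorem latticeEnergy_third {s : ℂ} (hs : s ≠ 1) :
    latticeEnergy s (1 / 3) =
      riemannZeta s * (((2 : ℂ) ^ s) ^ 2 - 2 ^ s + 2) / (2 * 2 ^ s) := by
  have hx : (2 : ℂ) ^ s ≠ 0 := by simp [cpow_eq_zero_iff]
  rw [latticeEnergy, show (1 / (1 + 1 / 3) : ℝ) = 3 / 4 by norm_num,
    show (1 / 3 / (1 + 1 / 3) : ℝ) = 1 / 4 by norm_num,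
    hurwitzZeta_three_quarters_add_quarter hs, cpow_neg, cpow_neg, cpow_add _ _ two_ne_zero,
    cpow_one]
  field_simp
  ring

theorem two_cpow_eq_iff {w : ℂ} (hw : w ≠ 0) (s : ℂ) :
    (2 : ℂ) ^ s = w ↔
      ∃ k : ℤ, s = (1 / Real.log 2) * (log w + 2 * Real.pi * I * k) := by
  have hl : (Real.log 2 : ℂ) ≠ 0 := by
    exact_mod_cast (Real.log_pos one_lt_two).ne'
  have hlog : log 2 = (Real.log 2 : ℂ) := by simp
  rw [cpow_def_of_ne_zero two_ne_zero, hlog]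
  conv_lhs => rw [← exp_log hw]
  rw [exp_eq_exp_iff_exists_int]
  refine exists_congr fun k ↦ ?_
  field_simp

/-- For `ρ ≠ 1`, `E(ρ, 1/3) = 0` iff `ζ(ρ) = 0` or
`ρ = (1/ln 2)[Log((1 ± i√7)/2) + 2πik]` for some `k ∈ ℤ`, where `Log` is the principal
branch of the complex logarithm. -/
theorem latticeEnergy_third_zeros (ρ : ℂ) (hρ : ρ ≠ 1) :
    latticeEnergy ρ (1 / 3) = 0 ↔
      riemannZeta ρ = 0 ∨
        ∃ k : ℤ,
          ρ = (1 / Real.log 2) *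
              (Complex.log ((1 + Complex.I * Real.sqrt 7) / 2) + 2 * Real.pi * Complex.I * k) ∨
          ρ = (1 / Real.log 2) *
              (Complex.log ((1 - Complex.I * Real.sqrt 7) / 2) + 2 * Real.pi * Complex.I * k) := by
  have hx : (2 : ℂ) ^ ρ ≠ 0 := by simp [cpow_eq_zero_iff]
  have h7 : (I * (Real.sqrt 7 : ℂ)) ^ 2 = -7 := by
    rw [mul_pow, I_sq, ← ofReal_pow, Real.sq_sqrt (by norm_num)]
    norm_num
  -- The two roots have product `2`, hence neither is zero.
  have hprod : ((1 + I * Real.sqrt 7) / 2) * ((1 - I * Real.sqrt 7) / 2) = (2 : ℂ) := by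
    linear_combination (-1 / 4 : ℂ) * h7
  have hne : ((1 + I * Real.sqrt 7) / 2) * ((1 - I * Real.sqrt 7) / 2) ≠ (0 : ℂ) :=
    hprod.trans_ne two_ne_zero
  rw [exists_or, ← two_cpow_eq_iff (left_ne_zero_of_mul hne),
    ← two_cpow_eq_iff (right_ne_zero_of_mul hne), latticeEnergy_third hρ,
    div_eq_zero_iff, or_iff_left (mul_ne_zero two_ne_zero hx), mul_eq_zero]
  refine or_congr_right ?_
  rw [← sub_eq_zero (b := (1 + I * (Real.sqrt 7 : ℂ)) / 2),
    ← sub_eq_zero (b := (1 - I * (Real.sqrt 7 : ℂ)) / 2), ← mul_eq_zero]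
  refine Eq.congr_left ?_
  linear_combination (1 / 4 : ℂ) * h7
end

section
/- Taylor expansion of the Hurwitz zeta function in its second argument: for every real a with 0 < a < 1 and every s ∈ ℂ with Re(s) > 1, the series ∑_{n=0}^∞ (−a)^n · [s(s+1)⋯(s+n−1)/n!] · ζ(s+n) converges and ζ(s,a) = a^{−s} + ∑_{n=0}^∞ (−a)^n · [s(s+1)⋯(s+n−1)/n!] · ζ(s+n), where the n = 0 coefficient is 1. -/
open Complex HurwitzZeta

/-!
Put `c n = s(s+1)⋯(s+n-1)/n!`, the coefficient in the binomial series
`(1 - z)^(-s) = ∑ c n zⁿ`, valid for `‖z‖ < 1`. Factoring out `m + 1` and taking `z = -a/(m+1)`,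
`(m + 1 + a)^(-s) = ∑ₙ (-a)ⁿ c n (m + 1)^(-(s+n))` for every `m ≥ 0`.
The double series in `(m, n)` converges absolutely, since its terms are bounded by
`‖c n‖ aⁿ · (m + 1)^(-Re s)` (`summable_double`); here `a < 1` and `Re s > 1` are used.
Summing over `n` first gives `ζ(s, a)` without its leading term `a^(-s)`
(`hasSum_binomial_shift`), and summing over `m` first gives the zeta values `ζ(s + n)`.
-/

/-- The rising binomial coefficient `binom(s+n-1, n) = s(s+1)⋯(s+n-1)/n!`. -/
noncomputable def risingCoeff (s : ℂ) (n : ℕ) : ℂ :=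
  (∏ i ∈ Finset.range n, (s + i)) / (n.factorial : ℂ)

lemma choose_eq_risingCoeff (s : ℂ) (n : ℕ) :
    Ring.choose (s + n - 1) n = risingCoeff s n := by
  have h := Ring.factorial_nsmul_multichoose_eq_ascPochhammer s n
  rw [Polynomial.ascPochhammer_smeval_eq_eval, Ring.multichoose_eq, nsmul_eq_mul] at h
  have h2 : ∀ n : ℕ, (ascPochhammer ℂ n).eval s = ∏ i ∈ Finset.range n, (s + i) := by
    intro n
    induction n with
    | zero => simp
    | succ k ih => rw [ascPochhammer_succ_eval, ih, Finset.prod_range_succ]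
  rw [risingCoeff, ← h2, ← h, mul_div_cancel_left₀ _ (by exact_mod_cast n.factorial_ne_zero)]

lemma hasSum_risingCoeff (s : ℂ) {z : ℂ} (hz : ‖z‖ < 1) :
    HasSum (fun n ↦ risingCoeff s n * z ^ n) ((1 - z) ^ (-s)) := by
  have h := (one_div_one_sub_cpow_hasFPowerSeriesOnBall_zero s).hasSum (y := z)
    (by simpa [enorm_eq_nnnorm] using! hz)
  simpa [choose_eq_risingCoeff, cpow_neg, mul_comm] using h

lemma summable_norm_risingCoeff (s : ℂ) {a : ℝ} (ha0 : 0 < a) (ha1 : a < 1) :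
    Summable (fun n ↦ ‖risingCoeff s n‖ * a ^ n) := by
  have h := (hasSum_risingCoeff s (z := (a : ℂ))
    (by simpa [abs_of_pos ha0] using ha1)).summable.norm
  simpa [abs_of_pos ha0] using h

/-- The binomial expansion of `(m + 1 + a)^(-s)` in powers of `a`, convergent since
`a / (m + 1) < 1`. -/
lemma hasSum_binomial_shift (s : ℂ) {a : ℝ} (ha0 : 0 < a) (ha1 : a < 1) (m : ℕ) :
    HasSum (fun n : ℕ ↦ (-(a : ℂ)) ^ n * risingCoeff s n * (1 / (m + 1 : ℂ) ^ (s + n)))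
      (1 / ((m + 1 : ℕ) + a : ℂ) ^ s) := by
  have hm : (0 : ℝ) < m + 1 := by positivity
  have hm' : (m + 1 : ℂ) ≠ 0 := by exact_mod_cast hm.ne'
  have hz : ‖(-(a : ℂ)) / (m + 1 : ℂ)‖ < 1 := by
    have : ‖(m + 1 : ℂ)‖ = m + 1 := by
      rw [← Nat.cast_succ, norm_natCast]; push_cast; rfl
    rw [norm_div, norm_neg, this, norm_real, Real.norm_of_nonneg ha0.le, div_lt_one hm]
    linarith [(Nat.cast_nonneg m : (0 : ℝ) ≤ m)]
  have h := (hasSum_risingCoeff s hz).mul_left (1 / (m + 1 : ℂ) ^ s)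
  have hterm : (fun n : ℕ ↦ (-(a : ℂ)) ^ n * risingCoeff s n * (1 / (m + 1 : ℂ) ^ (s + n))) =
      fun n ↦ 1 / (m + 1 : ℂ) ^ s * (risingCoeff s n * (-(a : ℂ) / (m + 1)) ^ n) := by
    ext n
    rw [cpow_add _ _ hm', cpow_natCast, div_pow]
    field_simp
  have hsum : 1 / ((m + 1 : ℕ) + a : ℂ) ^ s =
      1 / (m + 1 : ℂ) ^ s * (1 - -(a : ℂ) / (m + 1)) ^ (-s) := by
    -- both factors are nonnegative reals, so the complex power is multiplicative
    have h1 : ((m + 1 : ℕ) + a : ℂ) = ((m + 1 : ℝ) : ℂ) * ((1 + a / (m + 1) : ℝ) : ℂ) := by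
      push_cast; field_simp
    have h2 : (1 - -(a : ℂ) / (m + 1)) = ((1 + a / (m + 1) : ℝ) : ℂ) := by
      push_cast; ring
    rw [h1, h2, mul_cpow_ofReal_nonneg hm.le (by positivity), cpow_neg, one_div, mul_inv]
    push_cast
    rw [one_div]
  rw [hterm, hsum]
  exact h

lemma summable_double (s : ℂ) (hs : 1 < s.re) {a : ℝ} (ha0 : 0 < a) (ha1 : a < 1) :
    Summable (fun p : ℕ × ℕ ↦
      (-(a : ℂ)) ^ p.2 * risingCoeff s p.2 * (1 / (p.1 + 1 : ℂ) ^ (s + p.2))) := by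
  have h1 : Summable (fun m : ℕ ↦ 1 / ((m : ℝ) + 1) ^ s.re) := by
    have := (summable_nat_add_iff 1).mpr (Real.summable_one_div_nat_rpow.mpr hs)
    simpa using this
  refine Summable.of_norm_bounded (h1.mul_of_nonneg (summable_norm_risingCoeff s ha0 ha1)
    (fun m ↦ by positivity) (fun n ↦ by positivity)) ?_
  rintro ⟨m, n⟩
  have hm : (0 : ℝ) < m + 1 := by positivity
  have hn : ‖(m + 1 : ℂ) ^ (s + n)‖ = ((m : ℝ) + 1) ^ (s.re + n) := by
    have := norm_cpow_eq_rpow_re_of_pos hm (s + n)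
    simpa using this
  have hle : 1 / ((m : ℝ) + 1) ^ (s.re + n) ≤ 1 / ((m : ℝ) + 1) ^ s.re := by
    gcongr <;> simp
  simp only [norm_mul, norm_pow, norm_neg, norm_div, norm_one, hn, norm_real,
    Real.norm_of_nonneg ha0.le]
  rw [mul_comm, mul_comm (a ^ n)]
  exact mul_le_mul_of_nonneg_right hle (by positivity)

/-- Taylor expansion of the Hurwitz zeta function in its second argument:
for `0 < a < 1` and `Re(s) > 1`, the series
`∑_{n≥0} (−a)^n [s(s+1)⋯(s+n−1)/n!] ζ(s+n)` converges and
`ζ(s,a) = a^{−s} + ∑_{n≥0} (−a)^n [s(s+1)⋯(s+n−1)/n!] ζ(s+n)`. -/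
theorem hurwitzZeta_taylor_expansion (a : ℝ) (ha0 : 0 < a) (ha1 : a < 1)
    (s : ℂ) (hs : 1 < s.re) :
    Summable (fun n : ℕ =>
      (-(a : ℂ)) ^ n * ((∏ i ∈ Finset.range n, (s + i)) / (n.factorial : ℂ))
        * riemannZeta (s + n)) ∧
    hurwitzZeta (↑a : UnitAddCircle) s
      = (a : ℂ) ^ (-s) + ∑' n : ℕ,
          (-(a : ℂ)) ^ n * ((∏ i ∈ Finset.range n, (s + i)) / (n.factorial : ℂ))
            * riemannZeta (s + n) := by
  have hF := summable_double s hs ha0 ha1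
  have hrow := hF.hasSum.prod_fiberwise (hasSum_binomial_shift s ha0 ha1)
  have hcol := (hF.prod_symm.hasSum).prod_fiberwise (fun n ↦ (hF.prod_symm.prod_factor n).hasSum)
  have hzeta : ∀ n : ℕ, riemannZeta (s + n) = ∑' m : ℕ, 1 / (m + 1 : ℂ) ^ (s + n) := fun n ↦
    zeta_eq_tsum_one_div_nat_add_one_cpow (by
      have : (0 : ℝ) ≤ n := n.cast_nonneg
      simp only [add_re, natCast_re]; linarith)
  simp only [Prod.swap_prod_mk, Prod.fst_swap, Prod.snd_swap, tsum_mul_left, ← hzeta] at hcol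
  -- the two iterated sums have the same value
  have hswap := (Equiv.prodComm ℕ ℕ).tsum_eq (fun p : ℕ × ℕ ↦
      (-(a : ℂ)) ^ p.2 * risingCoeff s p.2 * (1 / (p.1 + 1 : ℂ) ^ (s + p.2)))
  simp only [Equiv.prodComm_apply, Prod.fst_swap, Prod.snd_swap] at hswap
  rw [hswap] at hcol
  have hH := hasSum_hurwitzZeta_of_one_lt_re (a := a) ⟨ha0.le, ha1.le⟩ hs
  refine ⟨hcol.summable, ?_⟩
  change _ = _ + ∑' n : ℕ, (-(a : ℂ)) ^ n * risingCoeff s n * riemannZeta (s + n)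
  rw [hcol.tsum_eq, ← hrow.tsum_eq, ← hH.tsum_eq, hH.summable.tsum_eq_zero_add]
  simp [cpow_neg]
end

section
/- For every fixed s ∈ ℂ ∖ {1}, the function ε ↦ E(s, 1−ε) − [ ζ(s) + ((2^{2+s} − 1)/2^{5+s}) s(1+s) ζ(s+2) (ε² + ε³ + (3/4)ε⁴ + (1/2)ε⁵) + (1/3)((2^{4+s} − 1)/2^{11+s}) s(1+s)(2+s)(3+s) ζ(s+4) (ε⁴ + 2ε⁵) ] is O(ε⁶) as ε → 0⁺; i.e., there exist C > 0 and ε₀ > 0 such that for all ε ∈ (0, ε₀) the modulus of this difference is at most C ε⁶. -/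
/-!
With `δ = ε / (2 (2 - ε))` the two shifts in `E(s, 1 - ε)` are `1/2 + δ` and `1/2 - δ`, so the
theorem reduces to the Taylor expansion at `δ = 0` of the Hurwitz zeta function,

  `ζ(s, 1/2 + δ) = ∑ⱼ binom(-s, j) (2 ^ (s + j) - 1) ζ(s + j) δ ^ j`   for `|δ| ≤ 1/4`, `s ≠ 1`

(`hurwitzZeta_eq_tsum`). For `Re s > 1` this follows by expanding every `(n + 1/2 + δ) ^ (-s)` in a
binomial series, interchanging the sums, and using `ζ(w, 1/2) = (2 ^ w - 1) ζ(w)`. The coefficients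
with `j ≥ 1` are entire in `s`: the pole of `ζ(s + j)` at `s = 1 - j` is cancelled by the factor
`s + j - 1` of `binom(-s, j)`. They are `O(2 ^ j (1 + η) ^ j)` locally uniformly in `s`, for every
`η > 0` (`exists_norm_hurwitzCoeff_succ_le`), so the series is holomorphic on `ℂ ∖ {1}` and the
identity theorem extends the expansion to all `s ≠ 1`.

Adding the expansions at `±δ` removes the odd powers, and the part of the power series from `δ ^ 6`
on is `O(δ ^ 6)` (`exists_norm_hurwitz_pair_sub_le`). Expanding `δ ^ 2` and `δ ^ 4` in powers of
`ε` (`delta_expansion`) then gives the stated polynomial.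
-/

open Complex HurwitzZeta

section HurwitzExpansion

open Filter Topology Finset

/-! ### Binomial coefficients and the coefficients of the expansion -/

/-- The binomial coefficient `binom(-s, j)`, as an explicit product. -/
noncomputable def negBinom (s : ℂ) (j : ℕ) : ℂ :=
  ∏ i ∈ range j, (-s - i) / (i + 1)

/-- The product `∏_{i<j} (R + i) / (i + 1)`, which bounds `‖binom(-s, j)‖` for `‖s‖ ≤ R`. -/
noncomputable def negBinomBound (R : ℝ) (j : ℕ) : ℝ :=
  ∏ i ∈ range j, (R + i) / (i + 1)

/-- The entire function `(w - 1) ζ(w)`, with its value `1` filled in at the pole `w = 1`. -/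
noncomputable def zetaReg : ℂ → ℂ :=
  Function.update (fun w : ℂ ↦ (w - 1) * riemannZeta w) 1 1

/-- The coefficient of `δ ^ j` in the Taylor expansion of `ζ(s, 1/2 + δ)` at `δ = 0`, namely
`binom(-s, j) (2 ^ (s + j) - 1) ζ(s + j)`. For `j ≥ 1` the last factor `-(s + j - 1) / j` of the
binomial coefficient is absorbed into `zetaReg`, so that the coefficient is entire in `s`. -/
noncomputable def hurwitzCoeff (s : ℂ) : ℕ → ℂ
  | 0 => (2 ^ s - 1) * riemannZeta s
  | j + 1 => -(negBinom s j / (j + 1)) * ((2 ^ (s + (j + 1)) - 1) * zetaReg (s + (j + 1)))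

lemma negBinom_succ (s : ℂ) (j : ℕ) :
    negBinom s (j + 1) = negBinom s j * ((-s - j) / (j + 1)) :=
  prod_range_succ _ _

lemma negBinomBound_succ (R : ℝ) (j : ℕ) :
    negBinomBound R (j + 1) = negBinomBound R j * ((R + j) / (j + 1)) :=
  prod_range_succ _ _

lemma negBinomBound_pos {R : ℝ} (hR : 0 < R) (j : ℕ) : 0 < negBinomBound R j :=
  prod_pos fun i _ ↦ by positivity

lemma norm_negBinom_le {s : ℂ} {R : ℝ} (hs : ‖s‖ ≤ R) (j : ℕ) :
    ‖negBinom s j‖ ≤ negBinomBound R j := by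
  rw [negBinom, norm_prod, negBinomBound]
  refine prod_le_prod (fun _ _ ↦ norm_nonneg _) fun i _ ↦ ?_
  rw [norm_div]
  have h1 : ‖((i : ℂ) + 1)‖ = (i : ℝ) + 1 := by
    rw [← Nat.cast_succ, norm_natCast]; push_cast; ring
  rw [h1]
  gcongr
  calc ‖-s - (i : ℂ)‖ ≤ ‖-s‖ + ‖(i : ℂ)‖ := norm_sub_le _ _
    _ ≤ R + i := by rw [norm_neg, norm_natCast]; gcongr

lemma summable_negBinomBound {R : ℝ} (hR : 0 < R) {x : ℝ} (hx0 : 0 < x) (hx : x < 1) :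
    Summable fun j : ℕ ↦ negBinomBound R j * x ^ j := by
  refine summable_of_ratio_test_tendsto_lt_one hx (Eventually.of_forall fun j ↦ ?_) ?_
  · have := negBinomBound_pos hR j
    positivity
  · have h : Tendsto (fun j : ℕ ↦ ((j : ℝ) + R) / (j + 1) * x) atTop (𝓝 (1 * x)) := by
      refine Tendsto.mul_const x ?_
      have h1 : Tendsto (fun j : ℕ ↦ 1 + (R - 1) * (1 / ((j : ℝ) + 1))) atTop
          (𝓝 (1 + (R - 1) * 0)) :=
        (tendsto_one_div_add_atTop_nhds_zero_nat.const_mul _).const_add _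
      rw [mul_zero, add_zero] at h1
      refine h1.congr fun j ↦ ?_
      field_simp
      ring
    rw [one_mul] at h
    refine h.congr fun j ↦ ?_
    have h0 := negBinomBound_pos hR j
    rw [negBinomBound_succ, Real.norm_of_nonneg (by positivity), Real.norm_of_nonneg (by positivity)]
    field_simp
    ring

lemma choose_eq_negBinom (s : ℂ) (j : ℕ) : Ring.choose (-s) j = negBinom s j := by
  induction j with
  | zero => simp [negBinom]
  | succ j ih =>
    rw [negBinom_succ, ← ih, Ring.choose_eq_smul, Ring.choose_eq_smul, descPochhammer_succ_right,
      Polynomial.smeval_mul, Polynomial.smeval_sub, Polynomial.smeval_X, Polynomial.smeval_natCast,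
      Nat.factorial_succ]
    simp only [smul_eq_mul, pow_one, pow_zero, nsmul_eq_mul, mul_one]
    push_cast
    have h1 : (j : ℂ) + 1 ≠ 0 := by exact_mod_cast Nat.succ_ne_zero j
    have h2 : ((j.factorial : ℕ) : ℂ) ≠ 0 := by exact_mod_cast j.factorial_ne_zero
    field_simp

lemma hasSum_one_add_cpow (s : ℂ) {x : ℂ} (hx : ‖x‖ < 1) :
    HasSum (fun j : ℕ ↦ negBinom s j * x ^ j) ((1 + x) ^ (-s)) := by
  have hx' : x ∈ Metric.eball (0 : ℂ) 1 := by
    rw [mem_eball_zero_iff, ← ofReal_norm, ENNReal.ofReal_lt_one]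
    exact hx
  have h := one_add_cpow_hasFPowerSeriesOnBall_zero (a := -s) |>.hasSum hx'
  rw [zero_add] at h
  refine h.congr_fun fun j ↦ ?_
  rw [binomialSeries_apply, choose_eq_negBinom, List.ofFn_const, List.prod_replicate, smul_eq_mul]

lemma zetaReg_of_ne {w : ℂ} (hw : w ≠ 1) : zetaReg w = (w - 1) * riemannZeta w :=
  Function.update_of_ne hw _ _

lemma differentiable_zetaReg : Differentiable ℂ zetaReg := by
  intro w
  have key : ∀ w : ℂ, w ≠ 1 → DifferentiableAt ℂ zetaReg w := fun w hw ↦ by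
    have h : DifferentiableAt ℂ (fun w : ℂ ↦ (w - 1) * riemannZeta w) w :=
      (differentiableAt_id.sub_const 1).mul (differentiableAt_riemannZeta hw)
    refine h.congr_of_eventuallyEq ?_
    filter_upwards [isOpen_ne.mem_nhds hw] with z hz using zetaReg_of_ne hz
  rcases eq_or_ne w 1 with rfl | hw
  · refine (analyticAt_of_differentiable_on_punctured_nhds_of_continuousAt ?_ ?_).differentiableAt
    · filter_upwards [self_mem_nhdsWithin] with t ht using key t ht
    · simpa only [zetaReg, continuousAt_update_same] using riemannZeta_residue_one
  · exact key w hw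

lemma hurwitzCoeff_of_ne {s : ℂ} {j : ℕ} (h : s + j ≠ 1) :
    hurwitzCoeff s j = negBinom s j * ((2 ^ (s + j) - 1) * riemannZeta (s + j)) := by
  cases j with
  | zero => simp [hurwitzCoeff, negBinom]
  | succ j =>
    push_cast at h
    have h1 : (j : ℂ) + 1 ≠ 0 := by exact_mod_cast Nat.succ_ne_zero j
    rw [hurwitzCoeff, zetaReg_of_ne h, negBinom_succ]
    push_cast
    field_simp
    ring

/-! ### Growth of the coefficients -/

lemma norm_riemannZeta_le {w : ℂ} (hw : 2 ≤ w.re) :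
    ‖riemannZeta w‖ ≤ ∑' n : ℕ, 1 / ((n : ℝ) + 1) ^ 2 := by
  have hsum : Summable fun n : ℕ ↦ 1 / ((n : ℝ) + 1) ^ 2 := by
    exact_mod_cast (summable_nat_add_iff 1).2 (Real.summable_one_div_nat_pow.2 one_lt_two)
  rw [zeta_eq_tsum_one_div_nat_add_one_cpow (by linarith)]
  refine tsum_of_norm_bounded hsum.hasSum fun n ↦ ?_
  have hn : (0 : ℝ) < (n : ℝ) + 1 := by positivity
  rw [norm_div, norm_one, show (n : ℂ) + 1 = (((n : ℝ) + 1 : ℝ) : ℂ) by push_cast; rfl,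
    norm_cpow_eq_rpow_re_of_pos hn]
  gcongr
  rw [← Real.rpow_natCast]
  exact Real.rpow_le_rpow_of_exponent_le (by linarith [n.cast_nonneg (α := ℝ)]) (by exact_mod_cast hw)

/-- Right of `Re w = 2` the zeta factor is bounded by its Dirichlet series; only finitely many of
the discs `‖w - j‖ ≤ R` reach further left, and these are covered by one compact disc. -/
lemma exists_norm_zetaReg_le {R : ℝ} (hR : 0 < R) :
    ∃ A > (0 : ℝ), ∀ s : ℂ, ‖s‖ ≤ R → ∀ j : ℕ, ‖zetaReg (s + j)‖ ≤ A * (j + 1) := by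
  obtain ⟨N, hN⟩ := exists_nat_ge (R + 2)
  obtain ⟨A₁, hA₁⟩ := (isCompact_closedBall (0 : ℂ) (R + N)).exists_bound_of_continuousOn
    differentiable_zetaReg.continuous.continuousOn
  set Z := ∑' n : ℕ, 1 / ((n : ℝ) + 1) ^ 2
  have hZ : 0 ≤ Z := tsum_nonneg fun n ↦ by positivity
  refine ⟨|A₁| + Z * (R + 1) + 1, by positivity, fun s hs j ↦ ?_⟩
  have hj0 : (0 : ℝ) ≤ j := j.cast_nonneg
  rcases le_total j N with hj | hj
  · have hj' : (j : ℝ) ≤ N := by exact_mod_cast hj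
    have h1 : ‖zetaReg (s + j)‖ ≤ A₁ := by
      refine hA₁ _ ?_
      rw [mem_closedBall_zero_iff]
      calc ‖s + j‖ ≤ ‖s‖ + ‖(j : ℂ)‖ := norm_add_le _ _
        _ ≤ R + N := by rw [norm_natCast]; linarith
    have h2 : 0 ≤ Z * (R + 1) := by positivity
    nlinarith [le_abs_self A₁, abs_nonneg A₁]
  · have hj' : (N : ℝ) ≤ j := by exact_mod_cast hj
    have hre : 2 ≤ (s + j).re := by
      have := (abs_le.1 ((abs_re_le_norm s).trans hs)).1
      simp only [add_re, natCast_re]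
      linarith
    have hne : s + j ≠ 1 := fun h ↦ by rw [h] at hre; norm_num at hre
    rw [zetaReg_of_ne hne, norm_mul]
    have h1 : ‖s + j - 1‖ ≤ R + j + 1 := by
      calc ‖s + j - 1‖ ≤ ‖s‖ + ‖(j : ℂ)‖ + ‖(1 : ℂ)‖ :=
            (norm_sub_le _ _).trans (by gcongr; exact norm_add_le _ _)
        _ ≤ R + j + 1 := by rw [norm_natCast, norm_one]; linarith
    calc ‖s + j - 1‖ * ‖riemannZeta (s + j)‖ ≤ (R + j + 1) * Z := by
          gcongr; exact norm_riemannZeta_le hre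
      _ ≤ (|A₁| + Z * (R + 1) + 1) * (j + 1) := by
          have : 0 ≤ Z * R * j := by positivity
          nlinarith [abs_nonneg A₁, mul_nonneg (abs_nonneg A₁) hj0]

/-- On `‖s‖ ≤ R` the coefficients grow at most like `2 ^ j` times a factor of exponential rate
one, reflecting the radius of convergence `1/2` of the Taylor expansion. -/
lemma exists_norm_hurwitzCoeff_succ_le {R : ℝ} (hR : 0 < R) :
    ∃ A > (0 : ℝ), ∀ s : ℂ, ‖s‖ ≤ R → ∀ j : ℕ,
      ‖hurwitzCoeff s (j + 1)‖ ≤ A * (negBinomBound R j * 2 ^ j) := by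
  obtain ⟨A, hA, h⟩ := exists_norm_zetaReg_le hR
  refine ⟨8 * A * 2 ^ R, by positivity, fun s hs j ↦ ?_⟩
  have hz := h s hs (j + 1)
  push_cast at hz
  have hp : ‖(2 : ℂ) ^ (s + (j + 1)) - 1‖ ≤ 4 * 2 ^ R * 2 ^ j := by
    have hre : (s + (j + 1)).re ≤ R + (j + 1 : ℕ) := by
      have := (abs_le.1 ((abs_re_le_norm s).trans hs)).2
      simp
      linarith
    have h1 : ‖(2 : ℂ) ^ (s + (j + 1))‖ ≤ 2 ^ R * 2 ^ (j + 1) := by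
      have := norm_cpow_eq_rpow_re_of_pos (x := 2) two_pos (s + (j + 1))
      norm_num only [ofReal_ofNat] at this
      rw [this, ← Real.rpow_natCast, ← Real.rpow_add two_pos]
      exact Real.rpow_le_rpow_of_exponent_le one_le_two hre
    have h2 : (1 : ℝ) ≤ 2 ^ R := Real.one_le_rpow one_le_two hR.le
    have h3 : (1 : ℝ) ≤ 2 ^ j := one_le_pow₀ one_le_two
    calc ‖(2 : ℂ) ^ (s + (j + 1)) - 1‖ ≤ 2 ^ R * 2 ^ (j + 1) + 1 :=
          (norm_sub_le _ _).trans (by rw [norm_one]; gcongr)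
      _ ≤ _ := by rw [pow_succ]; nlinarith [one_le_mul_of_one_le_of_one_le h2 h3]
  have hj1 : ‖((j : ℂ) + 1)‖ = (j : ℝ) + 1 := by
    rw [← Nat.cast_succ, norm_natCast]; push_cast; ring
  have hB := negBinomBound_pos hR j
  rw [hurwitzCoeff, norm_mul, norm_mul, norm_neg, norm_div, hj1]
  calc ‖negBinom s j‖ / (j + 1) * (‖(2 : ℂ) ^ (s + (j + 1)) - 1‖ * ‖zetaReg (s + (j + 1))‖)
      ≤ negBinomBound R j / (j + 1) * ((4 * 2 ^ R * 2 ^ j) * (A * (j + 1 + 1))) := by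
        gcongr
        exact norm_negBinom_le hs j
    _ = 4 * 2 ^ R * A * (negBinomBound R j * 2 ^ j) * ((j + 1 + 1) / (j + 1)) := by
        field_simp
    _ ≤ 4 * 2 ^ R * A * (negBinomBound R j * 2 ^ j) * 2 := by
        gcongr
        rw [div_le_iff₀ (by positivity)]
        linarith [j.cast_nonneg (α := ℝ)]
    _ = _ := by ring

lemma differentiable_hurwitzCoeff_succ (j : ℕ) :
    Differentiable ℂ fun s ↦ hurwitzCoeff s (j + 1) := by
  have hp : Differentiable ℂ fun s : ℂ ↦ (2 : ℂ) ^ (s + (j + 1)) - 1 := fun w ↦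
    ((differentiableAt_id.add_const _).const_cpow (Or.inl two_ne_zero)).sub_const 1
  have hn : Differentiable ℂ fun s ↦ negBinom s j := by
    unfold negBinom
    fun_prop
  have hz : Differentiable ℂ fun s ↦ zetaReg (s + (j + 1)) :=
    differentiable_zetaReg.comp (differentiable_id.add_const _)
  exact (hn.div_const _).neg.mul (hp.mul hz)

lemma differentiableAt_hurwitzCoeff_zero {s : ℂ} (hs : s ≠ 1) :
    DifferentiableAt ℂ (fun s ↦ hurwitzCoeff s 0) s :=
  ((differentiableAt_id.const_cpow (Or.inl two_ne_zero)).sub_const 1).mul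
    (differentiableAt_riemannZeta hs)

/-- A bound for the terms of the Taylor series in `|δ| ≤ 1/4`, uniform in `‖s‖ ≤ R` and summable
in `j`. -/
lemma exists_norm_hurwitzCoeff_mul_pow_le {R : ℝ} (hR : 0 < R) :
    ∃ u : ℕ → ℝ, Summable u ∧ ∀ s : ℂ, ‖s‖ ≤ R → ∀ δ : ℝ, |δ| ≤ 1 / 4 → ∀ j : ℕ,
      ‖hurwitzCoeff s (j + 1) * (δ : ℂ) ^ (j + 1)‖ ≤ u j := by
  obtain ⟨A, hA, h⟩ := exists_norm_hurwitzCoeff_succ_le hR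
  refine ⟨fun j ↦ A * (negBinomBound R j * (1 / 2) ^ j),
    (summable_negBinomBound hR one_half_pos one_half_lt_one).mul_left A, fun s hs δ hδ j ↦ ?_⟩
  have hB := negBinomBound_pos hR j
  rw [norm_mul, norm_pow, norm_real, Real.norm_eq_abs]
  calc ‖hurwitzCoeff s (j + 1)‖ * |δ| ^ (j + 1)
      ≤ A * (negBinomBound R j * 2 ^ j) * (1 / 4) ^ j := by
        gcongr
        · exact h s hs j
        · rw [pow_succ]
          calc |δ| ^ j * |δ| ≤ (1 / 4) ^ j * 1 := by gcongr; linarith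
            _ = _ := mul_one _
    _ = _ := by
        rw [show (1 / 4 : ℝ) = 1 / 2 * (1 / 2) by norm_num, mul_pow]
        have : (2 : ℝ) ^ j * (1 / 2) ^ j = 1 := by rw [← mul_pow]; norm_num
        linear_combination A * negBinomBound R j * (1 / 2) ^ j * this

lemma summable_hurwitzCoeff (s : ℂ) {δ : ℝ} (hδ : |δ| ≤ 1 / 4) :
    Summable fun j ↦ hurwitzCoeff s j * (δ : ℂ) ^ j := by
  obtain ⟨u, hu, h⟩ := exists_norm_hurwitzCoeff_mul_pow_le (R := ‖s‖ + 1) (by positivity)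
  rw [← summable_nat_add_iff 1]
  exact Summable.of_norm_bounded hu fun j ↦ h s (by linarith) δ hδ j

lemma differentiableOn_tsum_hurwitzCoeff {δ : ℝ} (hδ : |δ| ≤ 1 / 4) :
    DifferentiableOn ℂ (fun s ↦ ∑' j, hurwitzCoeff s j * (δ : ℂ) ^ j) {1}ᶜ := by
  have htail : Differentiable ℂ fun s ↦ ∑' j, hurwitzCoeff s (j + 1) * (δ : ℂ) ^ (j + 1) := by
    intro s₀
    obtain ⟨u, hu, h⟩ := exists_norm_hurwitzCoeff_mul_pow_le (R := ‖s₀‖ + 1) (by positivity)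
    refine (differentiableOn_tsum_of_summable_norm hu
      (fun j ↦ ((differentiable_hurwitzCoeff_succ j).mul_const _).differentiableOn)
      (Metric.isOpen_ball (x := (0 : ℂ)) (ε := ‖s₀‖ + 1)) fun j s hs ↦ ?_).differentiableAt
      (Metric.isOpen_ball.mem_nhds (by simp))
    exact h s (mem_ball_zero_iff.1 hs).le δ hδ j
  have h0 : DifferentiableOn ℂ (fun s ↦ hurwitzCoeff s 0 * (δ : ℂ) ^ 0) {1}ᶜ := fun s hs ↦
    ((differentiableAt_hurwitzCoeff_zero hs).mul_const _).differentiableWithinAt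
  refine (h0.add htail.differentiableOn).congr fun s _ ↦ ?_
  exact (summable_hurwitzCoeff s hδ).tsum_eq_zero_add

/-! ### The Taylor expansion of `ζ(s, 1/2 + δ)` -/

/-- The value `ζ(w, 1/2) = (2 ^ w - 1) ζ(w)`, from splitting `ζ(w)` into even and odd terms. -/
lemma hasSum_half_cpow {w : ℂ} (hw : 1 < w.re) :
    HasSum (fun n : ℕ ↦ ((n : ℂ) + 1 / 2) ^ (-w)) ((2 ^ w - 1) * riemannZeta w) := by
  have hz : HasSum (fun n : ℕ ↦ 1 / (n : ℂ) ^ w) (riemannZeta w) := by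
    have := hasSum_hurwitzZeta_of_one_lt_re (a := 0) ⟨le_rfl, zero_le_one⟩ hw
    simpa [hurwitzZeta_zero] using this
  have hS : Summable fun n : ℕ ↦ ((n : ℂ) + 1 / 2) ^ (-w) := by
    have := (hasSum_hurwitzZeta_of_one_lt_re (a := 1 / 2) (by norm_num) hw).summable
    refine this.congr fun n ↦ ?_
    rw [cpow_neg, one_div]
    push_cast
    rfl
  have h2 : (2 : ℂ) ^ w ≠ 0 := by simp [cpow_eq_zero_iff]
  have hE : HasSum (fun n : ℕ ↦ 1 / ((2 * n : ℕ) : ℂ) ^ w) ((2 ^ w)⁻¹ * riemannZeta w) := by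
    refine (hz.mul_left ((2 ^ w)⁻¹)).congr_fun fun n ↦ ?_
    rw [Nat.cast_mul, natCast_mul_natCast_cpow, Nat.cast_ofNat]
    field_simp
  have hO : HasSum (fun n : ℕ ↦ 1 / ((2 * n + 1 : ℕ) : ℂ) ^ w)
      ((2 ^ w)⁻¹ * ∑' n : ℕ, ((n : ℂ) + 1 / 2) ^ (-w)) := by
    refine (hS.hasSum.mul_left ((2 ^ w)⁻¹)).congr_fun fun n ↦ ?_
    have : ((2 * n + 1 : ℕ) : ℂ) = ((2 : ℝ) : ℂ) * (((n : ℝ) + 1 / 2 : ℝ) : ℂ) := by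
      push_cast; ring
    rw [this, mul_cpow_ofReal_nonneg (by norm_num) (by positivity), cpow_neg]
    push_cast
    rw [one_div, mul_inv]
  have hu := hz.unique (HasSum.even_add_odd hE hO)
  have : ∑' n : ℕ, ((n : ℂ) + 1 / 2) ^ (-w) = (2 ^ w - 1) * riemannZeta w := by
    set S := ∑' n : ℕ, ((n : ℂ) + 1 / 2) ^ (-w)
    field_simp at hu
    linear_combination -hu
  rw [← this]
  exact hS.hasSum

/-- In the half-plane of absolute convergence the expansion follows from expanding each term
`(n + 1/2 + δ) ^ (-s)` into a binomial series and interchanging the two summations. -/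
lemma hurwitzZeta_eq_tsum_of_one_lt_re {s : ℂ} (hs : 1 < s.re) {δ : ℝ} (hδ : |δ| ≤ 1 / 4) :
    hurwitzZeta ((1 / 2 + δ : ℝ) : UnitAddCircle) s = ∑' j, hurwitzCoeff s j * (δ : ℂ) ^ j := by
  have hδ' := abs_le.1 hδ
  set f : ℕ × ℕ → ℂ := fun p ↦
    negBinom s p.1 * (δ : ℂ) ^ p.1 * ((p.2 : ℂ) + 1 / 2) ^ (-(s + p.1)) with hf
  have hpos : ∀ n : ℕ, (0 : ℝ) < n + 1 / 2 := fun n ↦ by positivity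
  have hcast : ∀ n : ℕ, (n : ℂ) + 1 / 2 = (((n : ℝ) + 1 / 2 : ℝ) : ℂ) := fun n ↦ by
    push_cast; rfl
  have hs0 : 0 < ‖s‖ := by
    have := abs_re_le_norm s
    rw [abs_of_pos (by linarith)] at this
    linarith
  have hsum : Summable f := by
    have h1 := summable_negBinomBound hs0 one_half_pos one_half_lt_one
    have h2 := (hasSum_half_cpow hs).summable.norm
    refine Summable.of_norm_bounded (h1.mul_of_nonneg h2
      (fun j ↦ mul_nonneg (negBinomBound_pos hs0 j).le (by positivity))
      fun _ ↦ norm_nonneg _) fun ⟨j, n⟩ ↦ ?_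
    have hB := negBinomBound_pos hs0 j
    have hne : (n : ℂ) + 1 / 2 ≠ 0 := by
      rw [hcast]; exact_mod_cast (hpos n).ne'
    have hn : ‖(((n : ℂ) + 1 / 2) ^ j)⁻¹‖ ≤ 2 ^ j := by
      rw [hcast, norm_inv, norm_pow, norm_real, Real.norm_of_nonneg (hpos n).le, ← inv_pow]
      refine pow_le_pow_left₀ (inv_nonneg.2 (hpos n).le) ?_ j
      rw [inv_le_comm₀ (hpos n) two_pos]
      linarith [n.cast_nonneg (α := ℝ)]
    simp only [hf]
    rw [neg_add, cpow_add _ _ hne, cpow_neg _ (j : ℂ), cpow_natCast, norm_mul, norm_mul, norm_mul,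
      norm_pow, norm_real, Real.norm_eq_abs]
    calc ‖negBinom s j‖ * |δ| ^ j * (‖((n : ℂ) + 1 / 2) ^ (-s)‖ * ‖(((n : ℂ) + 1 / 2) ^ j)⁻¹‖)
        ≤ negBinomBound ‖s‖ j * (1 / 4) ^ j * (‖((n : ℂ) + 1 / 2) ^ (-s)‖ * 2 ^ j) := by
          gcongr
          exact norm_negBinom_le le_rfl j
      _ = _ := by
          rw [show (1 / 4 : ℝ) = 1 / 2 * (1 / 2) by norm_num, mul_pow]
          have : (2 : ℝ) ^ j * (1 / 2) ^ j = 1 := by rw [← mul_pow]; norm_num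
          linear_combination negBinomBound ‖s‖ j * (1 / 2) ^ j * ‖((n : ℂ) + 1 / 2) ^ (-s)‖ * this
  have hrow : ∀ j : ℕ, HasSum (fun n ↦ f (j, n)) (hurwitzCoeff s j * (δ : ℂ) ^ j) := fun j ↦ by
    have hre : 1 < (s + j).re := by
      simp only [add_re, natCast_re]
      linarith [j.cast_nonneg (α := ℝ)]
    have hne : s + j ≠ 1 := fun h ↦ by rw [h] at hre; norm_num at hre
    have h := (hasSum_half_cpow hre).mul_left (negBinom s j * (δ : ℂ) ^ j)
    rwa [mul_right_comm, ← hurwitzCoeff_of_ne hne] at h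
  have hcol : ∀ n : ℕ, HasSum (fun j ↦ f (j, n)) (1 / ((n : ℂ) + (1 / 2 + δ : ℝ)) ^ s) := by
    intro n
    have hne : (n : ℂ) + 1 / 2 ≠ 0 := by
      rw [hcast]; exact_mod_cast (hpos n).ne'
    have hn0 : (0 : ℝ) ≤ n := n.cast_nonneg
    set x : ℝ := δ / (n + 1 / 2) with hx
    have hx1 : |x| < 1 := by
      rw [hx, abs_div, abs_of_pos (hpos n), div_lt_one (hpos n)]
      linarith
    have h := (hasSum_one_add_cpow s (x := x) (by rwa [norm_real])).mul_left
      (((n : ℂ) + 1 / 2) ^ (-s))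
    have e : 1 / ((n : ℂ) + (1 / 2 + δ : ℝ)) ^ s =
        ((n : ℂ) + 1 / 2) ^ (-s) * (1 + (x : ℂ)) ^ (-s) := by
      have : (n : ℂ) + (1 / 2 + δ : ℝ) = (((n : ℝ) + 1 / 2 : ℝ) : ℂ) * ((1 + x : ℝ) : ℂ) := by
        rw [← ofReal_natCast, ← ofReal_add, ← ofReal_mul, hx]
        congr 1
        rw [mul_add, mul_one, mul_div_cancel₀ _ (hpos n).ne', add_assoc]
      rw [one_div, ← cpow_neg, this,
        mul_cpow_ofReal_nonneg (hpos n).le (by linarith [(abs_lt.1 hx1).1]), hcast]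
      push_cast
      rfl
    rw [e]
    refine h.congr_fun fun j ↦ ?_
    simp only [hf]
    rw [neg_add, cpow_add _ _ hne, cpow_neg _ (j : ℂ), cpow_natCast, hx]
    push_cast
    rw [div_pow]
    field_simp
  have hL := hasSum_hurwitzZeta_of_one_lt_re (a := 1 / 2 + δ)
    ⟨by linarith, by linarith⟩ hs
  have h1 := hsum.hasSum.prod_fiberwise hrow
  have h2 := ((Equiv.prodComm ℕ ℕ).hasSum_iff.2 hsum.hasSum).prod_fiberwise hcol
  rw [h1.tsum_eq]
  exact hL.unique h2

/-- The expansion of `ζ(s, 1/2 + δ)` for every `s ≠ 1`: both sides are holomorphic on the connected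
set `ℂ ∖ {1}` and agree for `Re s > 1`. -/
theorem hurwitzZeta_eq_tsum {s : ℂ} (hs : s ≠ 1) {δ : ℝ} (hδ : |δ| ≤ 1 / 4) :
    hurwitzZeta ((1 / 2 + δ : ℝ) : UnitAddCircle) s = ∑' j, hurwitzCoeff s j * (δ : ℂ) ^ j := by
  have hU : IsOpen ({1}ᶜ : Set ℂ) := isOpen_compl_singleton
  have hF : DifferentiableOn ℂ (hurwitzZeta ((1 / 2 + δ : ℝ) : UnitAddCircle)) {1}ᶜ :=
    fun s hs ↦ (differentiableAt_hurwitzZeta _ hs).differentiableWithinAt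
  refine (hF.analyticOnNhd hU).eqOn_of_preconnected_of_eventuallyEq
    ((differentiableOn_tsum_hurwitzCoeff hδ).analyticOnNhd hU)
    (isConnected_compl_singleton_of_one_lt_rank (by simp) 1).isPreconnected
    (show (2 : ℂ) ∈ ({1}ᶜ : Set ℂ) by norm_num) ?_ hs
  have : {z : ℂ | 1 < z.re} ∈ 𝓝 (2 : ℂ) :=
    (isOpen_lt continuous_const continuous_re).mem_nhds (by norm_num)
  filter_upwards [this] with z hz using hurwitzZeta_eq_tsum_of_one_lt_re hz hδ

/-- Adding the expansions at `δ` and `-δ` cancels the odd powers. -/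
theorem exists_norm_hurwitz_pair_sub_le {s : ℂ} (hs : s ≠ 1) :
    ∃ C > (0 : ℝ), ∀ δ : ℝ, |δ| ≤ 1 / 4 →
      ‖hurwitzZeta ((1 / 2 + δ : ℝ) : UnitAddCircle) s +
          hurwitzZeta ((1 / 2 - δ : ℝ) : UnitAddCircle) s -
        2 * (hurwitzCoeff s 0 + hurwitzCoeff s 2 * (δ : ℂ) ^ 2 + hurwitzCoeff s 4 * (δ : ℂ) ^ 4)‖
      ≤ C * |δ| ^ 6 := by
  have hsum : Summable fun j ↦ ‖hurwitzCoeff s (j + 6)‖ * (1 / 4) ^ j := by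
    have := ((summable_nat_add_iff 6).2
      (summable_hurwitzCoeff s (δ := 1 / 4) (by norm_num [abs_of_pos])).norm).mul_right (4 ^ 6)
    refine this.congr fun j ↦ ?_
    rw [norm_mul, norm_pow, norm_real, Real.norm_of_nonneg (by norm_num), pow_add]
    ring
  set C := ∑' j, ‖hurwitzCoeff s (j + 6)‖ * (1 / 4) ^ j
  have hC : 0 ≤ C := tsum_nonneg fun j ↦ by positivity
  have htail : ∀ δ : ℝ, |δ| ≤ 1 / 4 →
      ‖∑' j, hurwitzCoeff s (j + 6) * (δ : ℂ) ^ (j + 6)‖ ≤ C * |δ| ^ 6 := fun δ hδ ↦ by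
    refine tsum_of_norm_bounded (hsum.hasSum.mul_right (|δ| ^ 6)) fun j ↦ ?_
    rw [norm_mul, norm_pow, norm_real, Real.norm_eq_abs, pow_add, ← mul_assoc]
    gcongr
  refine ⟨2 * C + 1, by positivity, fun δ hδ ↦ ?_⟩
  have hδ' : |-δ| ≤ 1 / 4 := by rwa [abs_neg]
  have h1 := (summable_hurwitzCoeff s hδ).sum_add_tsum_nat_add 6
  have h2 := (summable_hurwitzCoeff s hδ').sum_add_tsum_nat_add 6
  have t1 := htail δ hδ
  have t2 := htail (-δ) hδ'
  rw [abs_neg] at t2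
  rw [← hurwitzZeta_eq_tsum hs hδ] at h1
  rw [← hurwitzZeta_eq_tsum hs hδ', ← sub_eq_add_neg] at h2
  rw [← h1, ← h2]
  simp only [sum_range_succ, range_zero, sum_empty]
  set u := ∑' j, hurwitzCoeff s (j + 6) * (δ : ℂ) ^ (j + 6)
  set v := ∑' j, hurwitzCoeff s (j + 6) * ((-δ : ℝ) : ℂ) ^ (j + 6)
  push_cast
  calc _ = ‖u + v‖ := by congr 1; ring
    _ ≤ C * |δ| ^ 6 + C * |δ| ^ 6 := (norm_add_le _ _).trans (add_le_add t1 t2)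
    _ ≤ _ := by nlinarith [pow_nonneg (abs_nonneg δ) 6]

end HurwitzExpansion

/-! ### Expansion in `ε` -/

/-- For `Δ = 1 - ε` the two shifts are `1/2 + δ` and `1/2 - δ` with `δ = ε / (2 (2 - ε))`; these are
the truncated expansions of `δ ^ 2` and `δ ^ 4` in powers of `ε`. -/
lemma delta_expansion {ε : ℝ} (h0 : 0 < ε) (h1 : ε < 1 / 2) :
    |(ε / (2 * (2 - ε))) ^ 2 - (ε ^ 2 + ε ^ 3 + 3 / 4 * ε ^ 4 + 1 / 2 * ε ^ 5) / 16| ≤ ε ^ 6 ∧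
    |(ε / (2 * (2 - ε))) ^ 4 - (ε ^ 4 + 2 * ε ^ 5) / 256| ≤ ε ^ 6 := by
  have h2 : 1 < 2 - ε := by linarith
  have h2' : 2 - ε ≠ 0 := by linarith
  have hp2 : 1 ≤ (2 - ε) ^ 2 := one_le_pow₀ h2.le
  have hp4 : 1 ≤ (2 - ε) ^ 4 := one_le_pow₀ h2.le
  constructor
  · have e : (ε / (2 * (2 - ε))) ^ 2 - (ε ^ 2 + ε ^ 3 + 3 / 4 * ε ^ 4 + 1 / 2 * ε ^ 5) / 16 =
        ε ^ 6 * ((5 / 64 - ε / 32) / (2 - ε) ^ 2) := by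
      field_simp
      ring
    rw [e, abs_of_nonneg (by have : 0 ≤ 5 / 64 - ε / 32 := by linarith
                             positivity)]
    refine mul_le_of_le_one_right (by positivity) ?_
    rw [div_le_one (by positivity)]
    linarith
  · have e : (ε / (2 * (2 - ε))) ^ 4 - (ε ^ 4 + 2 * ε ^ 5) / 256 =
        ε ^ 6 * ((10 / 64 - 20 / 128 * ε + 15 / 256 * ε ^ 2 - 4 / 512 * ε ^ 3) / (2 - ε) ^ 4) := by
      field_simp
      ring
    have hc : ε ^ 3 ≤ 1 / 8 := by
      calc ε ^ 3 ≤ (1 / 2) ^ 3 := by gcongr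
        _ = _ := by norm_num
    have hc2 : ε ^ 2 ≤ 1 / 4 := by
      calc ε ^ 2 ≤ (1 / 2) ^ 2 := by gcongr
        _ = _ := by norm_num
    have hc0 : 0 ≤ ε ^ 3 := by positivity
    have hc0' : 0 ≤ ε ^ 2 := by positivity
    have : 0 ≤ 10 / 64 - 20 / 128 * ε + 15 / 256 * ε ^ 2 - 4 / 512 * ε ^ 3 := by linarith
    rw [e, abs_of_nonneg (by positivity)]
    refine mul_le_of_le_one_right (by positivity) ?_
    rw [div_le_one (by positivity)]
    linarith

/-- For fixed `s ∈ ℂ ∖ {1}` (with `s+2 ≠ 1`, `s+4 ≠ 1`), as `ε → 0⁺`,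
`E(s, 1−ε)` differs from
`ζ(s) + ((2^{2+s}−1)/2^{5+s}) s(1+s) ζ(s+2)(ε²+ε³+(3/4)ε⁴+(1/2)ε⁵)
 + (1/3)((2^{4+s}−1)/2^{11+s}) s(1+s)(2+s)(3+s) ζ(s+4)(ε⁴+2ε⁵)`
by `O(ε⁶)`. -/
theorem latticeEnergy_taylor_in_epsilon (s : ℂ) (hs : s ≠ 1)
    (hs2 : s + 2 ≠ 1) (hs4 : s + 4 ≠ 1) :
    ∃ C > (0 : ℝ), ∃ ε₀ > (0 : ℝ), ∀ ε : ℝ, ε ∈ Set.Ioo 0 ε₀ →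
      ‖latticeEnergy s (1 - ε) -
        (riemannZeta s
          + ((2 ^ (2 + s) - 1) / 2 ^ (5 + s)) * s * (1 + s) * riemannZeta (s + 2)
            * ((ε : ℂ) ^ 2 + (ε : ℂ) ^ 3 + (3 / 4) * (ε : ℂ) ^ 4 + (1 / 2) * (ε : ℂ) ^ 5)
          + (1 / 3) * ((2 ^ (4 + s) - 1) / 2 ^ (11 + s)) * s * (1 + s) * (2 + s) * (3 + s)
            * riemannZeta (s + 4) * ((ε : ℂ) ^ 4 + 2 * (ε : ℂ) ^ 5))‖
        ≤ C * ε ^ 6 := by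
  obtain ⟨C, hC, h⟩ := exists_norm_hurwitz_pair_sub_le hs
  set P : ℂ := (2 : ℂ) ^ (-(s + 1))
  refine ⟨‖P‖ * C + ‖P * 2 * hurwitzCoeff s 2‖ + ‖P * 2 * hurwitzCoeff s 4‖ + 1, by positivity,
    1 / 2, one_half_pos, fun ε ⟨hε0, hε1⟩ ↦ ?_⟩
  obtain ⟨hd2, hd4⟩ := delta_expansion hε0 hε1
  set δ : ℝ := ε / (2 * (2 - ε)) with hδ
  have hpos : 0 < 2 - ε := by linarith
  have hδ0 : 0 ≤ δ := by positivity
  have hδε : δ ≤ ε := div_le_self hε0.le (by linarith)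
  have hδ4 : |δ| ≤ 1 / 4 := by
    rw [abs_of_nonneg hδ0, hδ, div_le_iff₀ (by positivity)]
    linarith
  have e1 : 1 / (1 + (1 - ε)) = 1 / 2 + δ := by
    rw [hδ, show 1 + (1 - ε) = 2 - ε by ring]
    field_simp
    ring
  have e2 : (1 - ε) / (1 + (1 - ε)) = 1 / 2 - δ := by
    rw [hδ, show 1 + (1 - ε) = 2 - ε by ring]
    field_simp
    ring
  have hmain := h δ hδ4
  set X := hurwitzZeta ((1 / 2 + δ : ℝ) : UnitAddCircle) s +
    hurwitzZeta ((1 / 2 - δ : ℝ) : UnitAddCircle) s with hX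
  have c0 : hurwitzCoeff s 0 = (2 ^ s - 1) * riemannZeta s := rfl
  have c2 : hurwitzCoeff s 2 = s * (1 + s) / 2 * ((4 * 2 ^ s - 1) * riemannZeta (s + 2)) := by
    rw [hurwitzCoeff_of_ne (by exact_mod_cast hs2), Nat.cast_ofNat, cpow_add _ _ two_ne_zero]
    simp [negBinom, Finset.prod_range_succ]
    ring
  have c4 : hurwitzCoeff s 4 = s * (1 + s) * (2 + s) * (3 + s) / 24 *
      ((16 * 2 ^ s - 1) * riemannZeta (s + 4)) := by
    rw [hurwitzCoeff_of_ne (by exact_mod_cast hs4), Nat.cast_ofNat, cpow_add _ _ two_ne_zero]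
    simp [negBinom, Finset.prod_range_succ]
    norm_num
    ring
  have h2s : (2 : ℂ) ^ s ≠ 0 := by simp [cpow_eq_zero_iff]
  have hpow : ∀ k : ℕ, (2 : ℂ) ^ ((k : ℂ) + s) = 2 ^ k * 2 ^ s := fun k ↦ by
    rw [cpow_add _ _ two_ne_zero, cpow_natCast]
  have p2 : (2 : ℂ) ^ (2 + s) = 2 ^ 2 * 2 ^ s := hpow 2
  have p4 : (2 : ℂ) ^ (4 + s) = 2 ^ 4 * 2 ^ s := hpow 4
  have p5 : (2 : ℂ) ^ (5 + s) = 2 ^ 5 * 2 ^ s := hpow 5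
  have p11 : (2 : ℂ) ^ (11 + s) = 2 ^ 11 * 2 ^ s := hpow 11
  have hP : P = (2 ^ s)⁻¹ / 2 := by
    simp only [P]
    rw [cpow_neg, cpow_add _ _ two_ne_zero, cpow_one]
    field_simp
  have key : latticeEnergy s (1 - ε) -
        (riemannZeta s
          + ((2 ^ (2 + s) - 1) / 2 ^ (5 + s)) * s * (1 + s) * riemannZeta (s + 2)
            * ((ε : ℂ) ^ 2 + (ε : ℂ) ^ 3 + (3 / 4) * (ε : ℂ) ^ 4 + (1 / 2) * (ε : ℂ) ^ 5)
          + (1 / 3) * ((2 ^ (4 + s) - 1) / 2 ^ (11 + s)) * s * (1 + s) * (2 + s) * (3 + s)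
            * riemannZeta (s + 4) * ((ε : ℂ) ^ 4 + 2 * (ε : ℂ) ^ 5)) =
      P * (X - 2 * (hurwitzCoeff s 0 + hurwitzCoeff s 2 * (δ : ℂ) ^ 2
        + hurwitzCoeff s 4 * (δ : ℂ) ^ 4)) +
      P * 2 * hurwitzCoeff s 2 *
        ((δ ^ 2 - (ε ^ 2 + ε ^ 3 + 3 / 4 * ε ^ 4 + 1 / 2 * ε ^ 5) / 16 : ℝ) : ℂ) +
      P * 2 * hurwitzCoeff s 4 * ((δ ^ 4 - (ε ^ 4 + 2 * ε ^ 5) / 256 : ℝ) : ℂ) := by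
    rw [latticeEnergy, e1, e2, ← hX, show (2 : ℂ) ^ (-(s + 1)) = P from rfl, hP, c0, c2, c4,
      cpow_neg, p2, p4, p5, p11]
    push_cast
    generalize (δ : ℂ) = d
    field_simp
    ring
  rw [key]
  refine (norm_add₃_le).trans ?_
  rw [norm_mul P, norm_mul (P * 2 * hurwitzCoeff s 2), norm_mul (P * 2 * hurwitzCoeff s 4),
    norm_real, norm_real, Real.norm_eq_abs, Real.norm_eq_abs]
  have hδ6 : |δ| ^ 6 ≤ ε ^ 6 := by rw [abs_of_nonneg hδ0]; gcongr
  calc _ ≤ ‖P‖ * (C * ε ^ 6) + ‖P * 2 * hurwitzCoeff s 2‖ * ε ^ 6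
          + ‖P * 2 * hurwitzCoeff s 4‖ * ε ^ 6 := by
        gcongr
        exact hmain.trans (by gcongr)
    _ ≤ _ := by
        have : 0 ≤ ε ^ 6 := by positivity
        linarith
end

section
/- Existence and asymptotics of off-critical zeros: for every k ∈ ℤ there exist ε₀ > 0, C > 0, and a function ρ : (0, ε₀) → ℂ such that for all ε ∈ (0, ε₀): (i) E(ρ(ε), 1−ε) = 0; (ii) |Im ρ(ε) − (2k+1)π/ln 2| ≤ C ε^{2 ln 3/ln 2}; (iii) |Re ρ(ε) − (2/ln 2) ln ε − (−3 + (2/ln 2) ln π)| ≤ C ε. In particular, Re ρ(ε) → −∞ as ε → 0⁺, and the imaginary parts of these zeros converge, as ε → 0⁺, to the equidistant values (2k+1)π/ln 2, k ∈ ℤ. -/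
/-!
Write `s = 1 - w` and `a = 1 / (2 - ε)`, so that the two Hurwitz parameters are `a` and `-a`
modulo `1`. Only the even Hurwitz zeta function enters, and its functional equation turns the
energy into a multiple of `cosZeta 0 w + cosZeta a w`. For `1 < re w` this is the Dirichlet series
`∑ c n / n ^ w` with `c n = 1 + cos (2 π a n) = 1 + (-1) ^ n cos (n δ)`, where `δ = π ε / (2 - ε)`.
Thus `c n = O(n² ε²)` for odd `n`, while `c n ≈ 2` for small even `n`.

When `re w` is large and `ε` is small, the terms `n = 1` and `n = 2` dominate. They cancel exactly
when `2 ^ (-w) = -q`, with `q = c 1 / c 2 ≈ (π ε / 4) ^ 2`; this is solved by `basePoint k q`. Put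
`w = basePoint k q + z` and `v = 2 ^ (-z)`. After division by `c 1` the equation becomes
`1 - v + b v ^ 2 + R = 0` (`decomposition`), where

* `b v ^ 2`, with `b = c 4 * q / c 2` real and `b = O(q)`, is the term `n = 4`;
* `R = O(q ^ (log 3 / log 2))` comes from `n = 3`, `n = 5` and `n ≥ 6`. The smallness of the odd
  coefficients is needed for `n = 3, 5`; for `n ≥ 6` the bound `c n ≤ 2` is enough, because
  `6 ^ (-w) / c 1` is of size `q * 3 ^ (-w) / c 1`.

The function `1 - 2 ^ (-z)` has size comparable to `‖z‖` on a circle of radius a multiple of `q`,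
so the quantitative open mapping theorem gives a zero with `z = O(q)` (`exists_zero`). For the
sharper bound on `im z`, take imaginary parts: since `b` is real,
`im v * (1 - 2 b re v) = im R`, hence `im z = O(q ^ (log 3 / log 2)) = O(ε ^ (2 log 3 / log 2))`
(`abs_im_zero_le`). The real part follows from `log q = 2 log (π ε / 4) + O(ε)`
(`abs_log_ratio_sub_le`).
-/

open Complex HurwitzZeta Filter

/-! ### Dirichlet series dominated by their first two terms -/

/-- The properties of the coefficients `c n = 1 + cos (2 π n / (2 - ε))`, for small `ε`, that the
perturbation argument uses. The value of `c 0` is immaterial, as its term in the series vanishes. -/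
structure AdmissibleCoeffs (c : ℕ → ℝ) : Prop where
  nonneg : ∀ n, 0 ≤ c n
  le_two : ∀ n, c n ≤ 2
  pos_one : 0 < c 1
  one_le_two : 1 ≤ c 2
  three_le : c 3 ≤ 100 * c 1
  five_le : c 5 ≤ 100 * c 1

/-- A solution `w` of `2 ^ (-w) = -q`, the one with imaginary part `-(2 k + 1) π / log 2`. -/
noncomputable def basePoint (k : ℤ) (q : ℝ) : ℂ :=
  -((Real.log q : ℂ) + (2 * k + 1) * Real.pi * I) / (Real.log 2 : ℝ)

lemma basePoint_re (k : ℤ) (q : ℝ) : (basePoint k q).re = -Real.log q / Real.log 2 := by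
  rw [basePoint, Complex.div_ofReal_re]
  simp

lemma basePoint_im (k : ℤ) (q : ℝ) :
    (basePoint k q).im = -((2 * k + 1) * Real.pi) / Real.log 2 := by
  rw [basePoint, Complex.div_ofReal_im]
  simp

lemma one_div_two_cpow_basePoint_add (k : ℤ) {q : ℝ} (hq : 0 < q) (z : ℂ) :
    1 / (2 : ℂ) ^ (basePoint k q + z) = -q * cexp (-(z * (Real.log 2 : ℝ))) := by
  have h2 : ((Real.log 2 : ℝ) : ℂ) ≠ 0 := by
    exact_mod_cast (Real.log_pos one_lt_two).ne'
  rw [one_div, ← Complex.cpow_neg, Complex.cpow_def_of_ne_zero two_ne_zero]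
  have : Complex.log 2 * -(basePoint k q + z) =
      (Real.log q : ℝ) + -(z * (Real.log 2 : ℝ)) + Real.pi * I + k * (2 * Real.pi * I) := by
    rw [show Complex.log 2 = ((Real.log 2 : ℝ) : ℂ) by simp, basePoint]
    field_simp
    ring
  rw [this, Complex.exp_add, Complex.exp_add, Complex.exp_add, Complex.exp_int_mul_two_pi_mul_I,
    Complex.exp_pi_mul_I, ← Complex.ofReal_exp, Real.exp_log hq]
  ring

lemma three_rpow_le {q x : ℝ} (hq : 0 < q) (hx : |x| ≤ 1) :
    (3 : ℝ) ^ (-(-Real.log q / Real.log 2 + x)) ≤ 3 * q ^ (Real.log 3 / Real.log 2) := by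
  have h : (3 : ℝ) ^ (-(-Real.log q / Real.log 2 + x)) =
      3 ^ (-x) * q ^ (Real.log 3 / Real.log 2) := by
    rw [Real.rpow_def_of_pos (by norm_num), Real.rpow_def_of_pos (by norm_num),
      Real.rpow_def_of_pos hq, ← Real.exp_add]
    congr 1
    ring
  rw [h]
  have : (3 : ℝ) ^ (-x) ≤ 3 ^ (1 : ℝ) :=
    Real.rpow_le_rpow_of_exponent_le (by norm_num) (by linarith [neg_abs_le x])
  rw [Real.rpow_one] at this
  have := Real.rpow_nonneg hq.le (Real.log 3 / Real.log 2)
  gcongr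

lemma two_rpow_le {q x : ℝ} (hq : 0 < q) (hx : |x| ≤ 1) :
    (2 : ℝ) ^ (-(-Real.log q / Real.log 2 + x)) ≤ 2 * q := by
  have h2 := Real.log_pos one_lt_two
  have h : (2 : ℝ) ^ (-(-Real.log q / Real.log 2 + x)) = 2 ^ (-x) * q := by
    conv_rhs => rw [← Real.exp_log hq]
    rw [Real.rpow_def_of_pos (by norm_num), Real.rpow_def_of_pos (by norm_num), ← Real.exp_add]
    congr 1
    field_simp
    ring
  rw [h]
  have : (2 : ℝ) ^ (-x) ≤ 2 ^ (1 : ℝ) :=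
    Real.rpow_le_rpow_of_exponent_le (by norm_num) (by linarith [neg_abs_le x])
  rw [Real.rpow_one] at this
  gcongr

lemma norm_term (c : ℕ → ℝ) (hc : ∀ n, 0 ≤ c n) {n : ℕ} (hn : 0 < n) (w : ℂ) :
    ‖(c n : ℂ) / (n : ℂ) ^ w‖ = c n * (n : ℝ) ^ (-w.re) := by
  rw [norm_div, Complex.norm_natCast_cpow_of_pos hn, Complex.norm_real, Real.norm_of_nonneg (hc n),
    Real.rpow_neg (by positivity)]
  rfl

/-- The sum of `1 / n ^ 2` over `n ≥ 6`. -/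
noncomputable def tailConst : ℝ := ∑' n : ℕ, 1 / ((n : ℝ) + 6) ^ 2

lemma hasSum_tailConst : HasSum (fun n : ℕ => 1 / ((n : ℝ) + 6) ^ 2) tailConst := by
  have h := (summable_nat_add_iff (f := fun n : ℕ => 1 / (n : ℝ) ^ 2) 6).2
    (Real.summable_one_div_nat_pow.2 one_lt_two)
  have h' : Summable (fun n : ℕ => 1 / ((n : ℝ) + 6) ^ 2) := by simpa using h
  exact h'.hasSum

lemma tailConst_nonneg : 0 ≤ tailConst := tsum_nonneg fun n => by positivity

/-- For `m = n + 6` and `2 ≤ σ`, compare `(m / 6) ^ (-σ)` with `(m / 6) ^ (-2)`: the tail of the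
Dirichlet series is controlled by its first term. -/
lemma rpow_tail_le {σ : ℝ} (hσ : 2 ≤ σ) (n : ℕ) :
    ((n + 6 : ℕ) : ℝ) ^ (-σ) ≤ 36 * 6 ^ (-σ) * (1 / ((n : ℝ) + 6) ^ 2) := by
  have hn : (0 : ℝ) < n + 6 := by positivity
  have h1 : (((n : ℝ) + 6) / 6) ^ (-σ) ≤ (((n : ℝ) + 6) / 6) ^ (-2 : ℝ) :=
    Real.rpow_le_rpow_of_exponent_le (by rw [le_div_iff₀ (by norm_num)]; linarith [n.cast_nonneg (α := ℝ)])
      (by linarith)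
  have h2 : (((n : ℝ) + 6) / 6) ^ (-2 : ℝ) = 36 * (1 / ((n : ℝ) + 6) ^ 2) := by
    rw [Real.rpow_neg (by positivity), Real.rpow_two]
    field_simp
    norm_num
  have h3 : ((n + 6 : ℕ) : ℝ) ^ (-σ) = 6 ^ (-σ) * (((n : ℝ) + 6) / 6) ^ (-σ) := by
    rw [← Real.mul_rpow (by norm_num) (by positivity)]
    push_cast
    congr 1
    ring
  rw [h3]
  have : (0 : ℝ) ≤ 6 ^ (-σ) := by positivity
  calc _ ≤ 6 ^ (-σ) * (36 * (1 / ((n : ℝ) + 6) ^ 2)) := by rw [← h2]; gcongr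
    _ = _ := by ring

/-- The constant in the bound for the remainder of `decomposition`: the terms `n = 3` and `n = 5`
contribute `100 * 3` each, and the tail `n ≥ 6` contributes `2 * 36 * 6 * tailConst`. -/
noncomputable def remConst : ℝ := 600 + 432 * tailConst

lemma basePoint_add_re (k : ℤ) {q : ℝ} (hq : 0 < q) (hq8 : q ≤ 1 / 8) {z : ℂ} (hz : ‖z‖ ≤ 1) :
    2 ≤ (basePoint k q + z).re := by
  have h2 := Real.log_pos one_lt_two
  rw [Complex.add_re, basePoint_re]
  have h1 : 3 ≤ -Real.log q / Real.log 2 := by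
    rw [le_div_iff₀ h2]
    have : Real.log q ≤ Real.log (1 / 8) := Real.log_le_log hq hq8
    rw [one_div, Real.log_inv, show (8 : ℝ) = 2 ^ 3 by norm_num, Real.log_pow] at this
    push_cast at this
    linarith
  have := (abs_le.1 ((Complex.abs_re_le_norm z).trans hz)).1
  linarith

/-- Near the base point the series, divided by `c 1`, is `1 - v + b v ^ 2 + R` with `v = 2 ^ (-z)`;
the summands are the terms `n = 1`, `n = 2`, `n = 4` and all the others. The coefficient `b` is
real, which is what makes the imaginary parts of the zeros much more accurate than `O(q)`. -/
lemma decomposition (k : ℤ) {c : ℕ → ℝ} (hc : AdmissibleCoeffs c) {F : ℂ → ℂ}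
    (hF : ∀ w : ℂ, 1 < w.re → HasSum (fun n : ℕ => (c n : ℂ) / (n : ℂ) ^ w) (F w))
    {q : ℝ} (hqdef : q = c 1 / c 2) (hq : 0 < q) (hq8 : q ≤ 1 / 8) {z : ℂ} (hz : ‖z‖ ≤ 1) :
    ∃ R : ℂ, ‖R‖ ≤ remConst * q ^ (Real.log 3 / Real.log 2) ∧
      F (basePoint k q + z) = c 1 * (1 - cexp (-(z * (Real.log 2 : ℝ))) +
        ((c 4 * q / c 2 : ℝ) : ℂ) * cexp (-(z * (Real.log 2 : ℝ))) ^ 2 + R) := by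
  have hre := basePoint_add_re k hq hq8 hz
  have hx := (Complex.abs_re_le_norm z).trans hz
  have hreq : (basePoint k q + z).re = -Real.log q / Real.log 2 + z.re := by
    rw [Complex.add_re, basePoint_re]
  have h3 := three_rpow_le hq hx
  have h2 := two_rpow_le hq hx
  have h2' := one_div_two_cpow_basePoint_add k hq z
  rw [← hreq] at h3 h2
  set w := basePoint k q + z with hw
  set v := cexp (-(z * (Real.log 2 : ℝ))) with hv
  set L := q ^ (Real.log 3 / Real.log 2) with hL
  have hL0 : 0 < L := Real.rpow_pos_of_pos hq _
  have c1 := hc.pos_one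
  have c2 : 0 < c 2 := lt_of_lt_of_le one_pos hc.one_le_two
  have hw1 : 1 < w.re := by linarith
  have hs := hF w hw1
  set g : ℕ → ℂ := fun n => (c n : ℂ) / (n : ℂ) ^ w with hg
  have hsplit := hs.summable.sum_add_tsum_nat_add 6
  rw [hs.tsum_eq] at hsplit
  have htail : ‖∑' n, g (n + 6)‖ ≤ 72 * 6 ^ (-w.re) * tailConst := by
    refine tsum_of_norm_bounded (hasSum_tailConst.mul_left _) fun n => ?_
    have := norm_term c hc.nonneg (Nat.succ_pos (n + 5)) w
    have h6 := rpow_tail_le hre n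
    have hn0 : (0 : ℝ) ≤ ((n + 6 : ℕ) : ℝ) ^ (-w.re) := by positivity
    calc ‖g (n + 6)‖ = c (n + 6) * ((n + 6 : ℕ) : ℝ) ^ (-w.re) := this
      _ ≤ 2 * (36 * 6 ^ (-w.re) * (1 / ((n : ℝ) + 6) ^ 2)) := by
        gcongr
        exact hc.le_two _
      _ = _ := by ring
  have h6 : (6 : ℝ) ^ (-w.re) ≤ 6 * q * L := by
    rw [show (6 : ℝ) = 2 * 3 by norm_num, Real.mul_rpow (by norm_num) (by norm_num)]
    calc _ ≤ (2 * q) * (3 * L) := by gcongr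
      _ = _ := by ring
  have h5 : (5 : ℝ) ^ (-w.re) ≤ 3 * L :=
    (Real.rpow_le_rpow_of_nonpos (by norm_num) (by norm_num) (by linarith)).trans h3
  have hg3 : ‖g 3‖ ≤ c 1 * (300 * L) := by
    have := norm_term c hc.nonneg (n := 3) (by norm_num) w
    push_cast at this
    calc ‖g 3‖ = c 3 * (3 : ℝ) ^ (-w.re) := by simpa [hg] using this
      _ ≤ (100 * c 1) * (3 * L) := by gcongr; exact hc.three_le
      _ = _ := by ring
  have hg5 : ‖g 5‖ ≤ c 1 * (300 * L) := by
    have := norm_term c hc.nonneg (n := 5) (by norm_num) w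
    push_cast at this
    calc ‖g 5‖ = c 5 * (5 : ℝ) ^ (-w.re) := by simpa [hg] using this
      _ ≤ (100 * c 1) * (3 * L) := by gcongr; exact hc.five_le
      _ = _ := by ring
  -- `6 ^ (-w)` carries an additional factor `q ≤ c 1`, which absorbs the division by `c 1`
  have hqc : q ≤ c 1 := by
    rw [hqdef]; exact div_le_self c1.le hc.one_le_two
  have ht := tailConst_nonneg
  have htail' : ‖∑' n, g (n + 6)‖ ≤ c 1 * (432 * tailConst * L) := by
    calc _ ≤ 72 * (6 * c 1 * L) * tailConst := by
          refine htail.trans ?_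
          gcongr
          exact h6.trans (by gcongr)
      _ = _ := by ring
  have hc1 : (c 1 : ℂ) ≠ 0 := by exact_mod_cast c1.ne'
  have hc2 : (c 2 : ℂ) ≠ 0 := by exact_mod_cast c2.ne'
  refine ⟨(g 3 + g 5 + ∑' n, g (n + 6)) / c 1, ?_, ?_⟩
  · rw [norm_div, Complex.norm_real, Real.norm_of_nonneg c1.le, div_le_iff₀ c1, remConst]
    have := norm_add₃_le (a := g 3) (b := g 5) (c := ∑' n, g (n + 6))
    linarith
  · have hw0 : w ≠ 0 := by
      intro h
      rw [h] at hw1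
      simp at hw1
      linarith
    have e0 : g 0 = 0 := by simp [hg, hw0]
    have e1 : g 1 = c 1 := by simp [hg]
    have e2 : g 2 = -(c 1 * v) := by
      have : g 2 = c 2 * (1 / (2 : ℂ) ^ w) := by simp [hg, div_eq_mul_inv]
      rw [this, h2', hqdef]
      push_cast
      field_simp
    have e4 : g 4 = c 1 * (((c 4 * q / c 2 : ℝ) : ℂ) * v ^ 2) := by
      have h4 : (4 : ℂ) ^ w = (2 : ℂ) ^ w * (2 : ℂ) ^ w := by
        have h := Complex.natCast_mul_natCast_cpow 2 2 w
        norm_num at h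
        exact h
      have : g 4 = c 4 * ((1 / (2 : ℂ) ^ w) * (1 / (2 : ℂ) ^ w)) := by
        simp [hg, div_eq_mul_inv, h4]
      rw [this, h2', hqdef]
      push_cast
      field_simp
    rw [← hsplit]
    simp only [Finset.sum_range_succ, Finset.sum_range_zero, e0, e1, e2, e4]
    field_simp
    ring

/-! ### Existence and location of the zero -/

/-- Existence of a zero at distance `O(q)` from the base point. The function `1 - 2 ^ (-z)` vanishes
at `0` and has modulus at least `r / 4` on the circle of radius `r = 17 M q`, while the perturbation
is at most `M q`, with `M = 8 + remConst`; the quantitative open mapping theorem applies because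
`r / 4 - 2 M q > 2 M q`. -/
lemma exists_zero (k : ℤ) {c : ℕ → ℝ} (hc : AdmissibleCoeffs c) {F : ℂ → ℂ}
    (hF : ∀ w : ℂ, 1 < w.re → HasSum (fun n : ℕ => (c n : ℂ) / (n : ℂ) ^ w) (F w))
    (hFd : ∀ w : ℂ, 1 < w.re → DifferentiableAt ℂ F w)
    {q : ℝ} (hqdef : q = c 1 / c 2) (hq : 0 < q)
    (hqs : q * (2 * (17 * (8 + remConst))) ≤ 1) :
    ∃ z : ℂ, ‖z‖ ≤ 17 * (8 + remConst) * q ∧ F (basePoint k q + z) = 0 := by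
  have hR0 : 600 ≤ remConst := by
    have := tailConst_nonneg
    rw [remConst]; linarith
  set M := 8 + remConst with hM
  have hq8 : q ≤ 1 / 8 := by nlinarith
  have hl2 := Real.log_two_gt_d9
  have hl2' := Real.log_two_lt_d9
  set r := 17 * M * q with hr
  have hr0 : 0 < r := by positivity
  have hr1 : r ≤ 1 / 2 := by rw [hr]; linarith
  have c1 := hc.pos_one
  have c2 : 0 < c 2 := lt_of_lt_of_le one_pos hc.one_le_two
  set f : ℂ → ℂ := fun z => F (basePoint k q + z) / c 1 with hf
  have hc1 : (c 1 : ℂ) ≠ 0 := by exact_mod_cast ne_of_gt c1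
  -- `f z` is `1 - 2 ^ (-z)` up to an error of size `M * q`
  have key : ∀ z : ℂ, ‖z‖ ≤ 1 → ‖f z - (1 - cexp (-(z * (Real.log 2 : ℝ))))‖ ≤ M * q := by
    intro z hz
    obtain ⟨R, hR, h⟩ := decomposition k hc hF hqdef hq hq8 hz
    have hv : ‖cexp (-(z * (Real.log 2 : ℝ)))‖ ≤ 2 := by
      rw [Complex.norm_exp]
      have h1 := neg_le_of_abs_le ((Complex.abs_re_le_norm z).trans hz)
      have : (-(z * (Real.log 2 : ℝ))).re ≤ Real.log 2 := by
        simp only [Complex.neg_re, Complex.re_mul_ofReal]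
        nlinarith
      calc _ ≤ Real.exp (Real.log 2) := Real.exp_le_exp.2 this
        _ = 2 := Real.exp_log two_pos
    have hfz : f z - (1 - cexp (-(z * (Real.log 2 : ℝ)))) =
        ((c 4 * q / c 2 : ℝ) : ℂ) * cexp (-(z * (Real.log 2 : ℝ))) ^ 2 + R := by
      simp only [hf]
      rw [h, mul_div_cancel_left₀ _ hc1]
      ring
    have hb0 : 0 ≤ c 4 * q / c 2 := div_nonneg (mul_nonneg (hc.nonneg 4) hq.le) c2.le
    have hb : c 4 * q / c 2 ≤ 2 * q := by
      calc _ ≤ c 4 * q := div_le_self (mul_nonneg (hc.nonneg 4) hq.le) hc.one_le_two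
        _ ≤ 2 * q := by gcongr; exact hc.le_two 4
    have hL : q ^ (Real.log 3 / Real.log 2) ≤ q := by
      have h1 : 1 ≤ Real.log 3 / Real.log 2 := by
        rw [one_le_div (by linarith)]
        exact Real.log_le_log (by norm_num) (by norm_num)
      simpa using Real.rpow_le_rpow_of_exponent_ge hq (by linarith) h1
    rw [hfz]
    calc _ ≤ (c 4 * q / c 2) * ‖cexp (-(z * (Real.log 2 : ℝ)))‖ ^ 2 + ‖R‖ := by
          refine (norm_add_le _ _).trans_eq ?_
          rw [norm_mul, norm_pow, Complex.norm_real, Real.norm_of_nonneg hb0]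
      _ ≤ (2 * q) * 2 ^ 2 + remConst * q := by
          gcongr
          exact hR.trans (by gcongr)
      _ = M * q := by rw [hM]; ring
  have hf0 : ‖f 0‖ ≤ M * q := by simpa using key 0 (by simp)
  have hlow : ∀ z ∈ Metric.sphere (0 : ℂ) r, r / 4 - 2 * (M * q) ≤ ‖f z - f 0‖ := by
    intro z hz
    have hzr : ‖z‖ = r := by simpa using hz
    have hk := key z (by linarith)
    set h := -(z * (Real.log 2 : ℝ)) with hh
    have hn : ‖h‖ = r * Real.log 2 := by
      rw [hh, norm_neg, norm_mul, hzr, Complex.norm_real, Real.norm_of_nonneg (by linarith)]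
    have hn1 : ‖h‖ ≤ 1 / 2 := by rw [hn]; nlinarith
    have he := Complex.norm_exp_sub_one_sub_id_le (x := h) (by linarith)
    have t1 : ‖h‖ ≤ ‖cexp h - 1 - h‖ + ‖f z - (1 - cexp h)‖ + ‖f z - f 0‖ + ‖f 0‖ := by
      have : h = -(cexp h - 1 - h) + (f z - (1 - cexp h)) - (f z - f 0) - f 0 := by ring
      calc ‖h‖ = ‖-(cexp h - 1 - h) + (f z - (1 - cexp h)) - (f z - f 0) - f 0‖ := by rw [← this]
        _ ≤ _ := by
          refine (norm_sub_le _ _).trans (add_le_add ((norm_sub_le _ _).trans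
            (add_le_add ((norm_add_le _ _).trans ?_) le_rfl)) le_rfl)
          rw [norm_neg]
    have : ‖h‖ ^ 2 ≤ ‖h‖ / 2 := by nlinarith [norm_nonneg h]
    have : r / 4 ≤ ‖h‖ / 2 := by rw [hn]; nlinarith
    linarith
  have hdiff : ∀ z : ℂ, ‖z‖ < 1 → DifferentiableAt ℂ f z := by
    intro z hz
    have hre := basePoint_add_re k hq hq8 hz.le
    exact ((hFd _ (show 1 < (basePoint k q + z).re by linarith)).comp z ((differentiableAt_id).const_add _)).div_const _
  have hdc : DiffContOnCl ℂ f (Metric.ball 0 r) := by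
    apply DifferentiableOn.diffContOnCl
    intro z hz
    have := Metric.closure_ball_subset_closedBall hz
    rw [mem_closedBall_zero_iff] at this
    exact (hdiff z (by linarith)).differentiableWithinAt
  have hMq : 0 < M * q := by positivity
  have hrM : r = 17 * (M * q) := by rw [hr]; ring
  -- a locally constant `f` would be constant on the unit ball, against the bound on the circle
  have hfreq : ∃ᶠ z in nhds (0 : ℂ), f z ≠ f 0 := by
    intro hcon
    have hev : f =ᶠ[nhds 0] fun _ => f 0 := by
      filter_upwards [hcon] with z hz using not_not.1 hz
    have han : AnalyticOnNhd ℂ f (Metric.ball 0 1) :=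
      DifferentiableOn.analyticOnNhd
        (fun z hz => (hdiff z (by simpa using hz)).differentiableWithinAt) Metric.isOpen_ball
    have heq := han.eqOn_of_preconnected_of_eventuallyEq analyticOnNhd_const
      (convex_ball (0 : ℂ) 1).isPreconnected (Metric.mem_ball_self one_pos) hev
    have hnr : ‖(r : ℂ)‖ = r := by rw [Complex.norm_real, Real.norm_of_nonneg hr0.le]
    have h1 := hlow (r : ℂ) (by simpa using hnr)
    rw [heq (show (r : ℂ) ∈ Metric.ball 0 1 by rw [mem_ball_zero_iff, hnr]; linarith)] at h1
    simp only [sub_self, norm_zero] at h1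
    linarith
  have hball := hdc.ball_subset_image_closedBall hr0 hlow hfreq
  have h0 : (0 : ℂ) ∈ Metric.ball (f 0) ((r / 4 - 2 * (M * q)) / 2) := by
    rw [Metric.mem_ball, dist_zero_left]
    linarith
  obtain ⟨z, hz, hfz⟩ := hball h0
  refine ⟨z, by simpa using hz, ?_⟩
  simpa [hf, hc1] using hfz

/-- A zero near the base point has imaginary part accurate to the order of the remainder `R`: taking
imaginary parts in `v = 1 + b v ^ 2 + R` removes the real main terms. -/
lemma abs_im_zero_le (k : ℤ) {c : ℕ → ℝ} (hc : AdmissibleCoeffs c) {F : ℂ → ℂ}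
    (hF : ∀ w : ℂ, 1 < w.re → HasSum (fun n : ℕ => (c n : ℂ) / (n : ℂ) ^ w) (F w))
    {q : ℝ} (hqdef : q = c 1 / c 2) (hq : 0 < q) (hq16 : q ≤ 1 / 16)
    {z : ℂ} (hz : ‖z‖ ≤ 1) (hzero : F (basePoint k q + z) = 0) :
    |z.im| ≤ 16 * remConst * q ^ (Real.log 3 / Real.log 2) := by
  have hl2 := Real.log_two_gt_d9
  have hl2' := Real.log_two_lt_d9
  have c1 := hc.pos_one
  have c2 : 0 < c 2 := lt_of_lt_of_le one_pos hc.one_le_two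
  have hc1 : (c 1 : ℂ) ≠ 0 := by exact_mod_cast c1.ne'
  obtain ⟨R, hR, h⟩ := decomposition k hc hF hqdef hq (by linarith) hz
  set b := c 4 * q / c 2 with hb
  have hb0 : 0 ≤ b := div_nonneg (mul_nonneg (hc.nonneg 4) hq.le) c2.le
  have hb2 : b ≤ 2 * q := by
    calc _ ≤ c 4 * q := div_le_self (mul_nonneg (hc.nonneg 4) hq.le) hc.one_le_two
      _ ≤ 2 * q := by gcongr; exact hc.le_two 4
  rw [hzero, eq_comm, mul_eq_zero, or_iff_right hc1] at h
  have hxy := abs_le.1 ((Complex.abs_re_le_norm z).trans hz)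
  have hy := (Complex.abs_im_le_norm z).trans hz
  set v := cexp (-(z * (Real.log 2 : ℝ))) with hv
  have hvre : v.re = Real.exp (-(z.re * Real.log 2)) * Real.cos (-(z.im * Real.log 2)) := by
    rw [hv, Complex.exp_re, Complex.neg_re, Complex.neg_im, Complex.re_mul_ofReal,
      Complex.im_mul_ofReal]
  have hvim : v.im = Real.exp (-(z.re * Real.log 2)) * Real.sin (-(z.im * Real.log 2)) := by
    rw [hv, Complex.exp_im, Complex.neg_re, Complex.neg_im, Complex.re_mul_ofReal,
      Complex.im_mul_ofReal]
  have he2 : Real.exp (-(z.re * Real.log 2)) ≤ 2 := by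
    calc _ ≤ Real.exp (Real.log 2) := Real.exp_le_exp.2 (by nlinarith)
      _ = 2 := Real.exp_log two_pos
  have he1 : 1 / 2 ≤ Real.exp (-(z.re * Real.log 2)) := by
    calc (1 / 2 : ℝ) = Real.exp (-Real.log 2) := by
          rw [Real.exp_neg, Real.exp_log two_pos, one_div]
      _ ≤ _ := Real.exp_le_exp.2 (by nlinarith)
  have hvre2 : |v.re| ≤ 2 := by
    rw [hvre, abs_mul, abs_of_pos (Real.exp_pos _)]
    have := Real.abs_cos_le_one (-(z.im * Real.log 2))
    nlinarith [Real.exp_pos (-(z.re * Real.log 2))]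
  -- imaginary part of `v = 1 + b v ^ 2 + R`
  have him : v.im * (1 - 2 * b * v.re) = R.im := by
    have := congrArg Complex.im h
    simp only [Complex.add_im, Complex.sub_im, Complex.one_im, pow_two,
      Complex.mul_im, Complex.ofReal_re, Complex.ofReal_im, Complex.zero_im] at this
    linarith
  have hfac : 1 / 2 ≤ 1 - 2 * b * v.re := by
    have := (abs_le.1 hvre2).2
    nlinarith
  have hvim2 : |v.im| ≤ 2 * ‖R‖ := by
    have h1 : |v.im| * (1 - 2 * b * v.re) = |R.im| := by
      rw [← him, abs_mul, abs_of_nonneg (by linarith : 0 ≤ 1 - 2 * b * v.re)]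
    have := Complex.abs_im_le_norm R
    nlinarith [abs_nonneg v.im]
  have hpi := Real.pi_gt_three
  have hpi4 := Real.pi_le_four
  have hyl : |-(z.im * Real.log 2)| = |z.im| * Real.log 2 := by
    rw [abs_neg, abs_mul, abs_of_pos (by linarith : 0 < Real.log 2)]
  have hsin := Real.mul_abs_le_abs_sin (x := -(z.im * Real.log 2))
    (by rw [hyl]; nlinarith [abs_nonneg z.im])
  have h2pi : 1 / 2 ≤ 2 / Real.pi := by
    rw [div_le_div_iff₀ two_pos (by linarith)]; linarith
  have h8 : |z.im| / 8 ≤ |v.im| := by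
    rw [hvim, abs_mul, abs_of_pos (Real.exp_pos _)]
    rw [hyl] at hsin
    have h4 : |z.im| / 4 ≤ |Real.sin (-(z.im * Real.log 2))| := by
      refine le_trans ?_ hsin
      nlinarith [abs_nonneg z.im, mul_nonneg (abs_nonneg z.im) (by linarith : 0 ≤ Real.log 2)]
    nlinarith [abs_nonneg z.im]
  linarith

/-! ### The energy as a Dirichlet series -/

/-- The Hurwitz parameter `1 / (1 + Δ)` at `Δ = 1 - ε`. -/
noncomputable def shift (ε : ℝ) : ℝ := 1 / (2 - ε)

/-- The Dirichlet coefficients of `cosZetaSum ε`. -/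
noncomputable def energyCoeff (ε : ℝ) (n : ℕ) : ℝ := 1 + Real.cos (2 * Real.pi * shift ε * n)

/-- The function dual to the energy at `Δ = 1 - ε` under the functional equation `s ↔ 1 - s`. -/
noncomputable def cosZetaSum (ε : ℝ) (w : ℂ) : ℂ :=
  cosZeta (0 : UnitAddCircle) w + cosZeta (shift ε : UnitAddCircle) w

lemma hasSum_cosZetaSum (ε : ℝ) (w : ℂ) (hw : 1 < w.re) :
    HasSum (fun n : ℕ => (energyCoeff ε n : ℂ) / (n : ℂ) ^ w) (cosZetaSum ε w) := by
  have h0 := hasSum_nat_cosZeta 0 hw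
  have h1 := hasSum_nat_cosZeta (shift ε) hw
  have h := h0.add h1
  rw [show ((0 : ℝ) : UnitAddCircle) = 0 from rfl] at h
  refine h.congr_fun fun n => ?_
  simp only [energyCoeff]
  push_cast
  simp [add_div]

lemma differentiableAt_cosZetaSum (ε : ℝ) (w : ℂ) (hw : 1 < w.re) :
    DifferentiableAt ℂ (cosZetaSum ε) w := by
  have h1 : w ≠ 1 := by
    rintro rfl
    simp at hw
  exact (differentiableAt_cosZeta _ (Or.inl h1)).add (differentiableAt_cosZeta _ (Or.inl h1))

lemma latticeEnergy_one_sub_eq_zero {ε : ℝ} (hε : ε < 2) {w : ℂ} (hw : 1 < w.re)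
    (h : cosZetaSum ε w = 0) : latticeEnergy (1 - w) (1 - ε) = 0 := by
  have hne : (2 - ε) ≠ 0 := by linarith
  have ha : (1 : ℝ) / (1 + (1 - ε)) = shift ε := by
    rw [shift]; congr 1; ring
  have hb : (1 - ε) / (1 + (1 - ε)) = 1 - shift ε := by
    rw [shift, show 1 + (1 - ε) = 2 - ε by ring]
    field_simp
    ring
  have hb' : ((1 - shift ε : ℝ) : UnitAddCircle) = -(shift ε : UnitAddCircle) := by
    rw [AddCircle.coe_sub, AddCircle.coe_period, zero_sub]
  have hw1 : w ≠ 1 := by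
    rintro rfl
    simp at hw
  have hwn : ∀ n : ℕ, w ≠ -n := by
    rintro n rfl
    simp at hw
    linarith [n.cast_nonneg (α := ℝ)]
  have hsum : hurwitzZeta (shift ε : UnitAddCircle) (1 - w) +
      hurwitzZeta (-(shift ε : UnitAddCircle)) (1 - w) =
      2 * hurwitzZetaEven (shift ε : UnitAddCircle) (1 - w) := by
    rw [hurwitzZetaEven_eq]; ring
  rw [latticeEnergy, ha, hb, hb', hsum, ← hurwitzZetaEven_zero,
    hurwitzZetaEven_one_sub _ hwn (Or.inr hw1), hurwitzZetaEven_one_sub _ hwn (Or.inr hw1),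
    neg_add, Complex.cpow_add _ _ two_ne_zero, Complex.cpow_neg_one]
  rw [cosZetaSum] at h
  linear_combination (2 : ℂ) ^ (-(1 - w)) * (2 * (2 * Real.pi) ^ (-w) * Gamma w *
    Complex.cos (Real.pi * w / 2)) * h

/-! ### Size of the coefficients -/

/-- The angle `δ` by which `2 π / (2 - ε)` exceeds `π`. -/
noncomputable def defect (ε : ℝ) : ℝ := Real.pi * ε / (2 - ε)

lemma two_pi_shift (ε : ℝ) (hε : ε < 2) : 2 * Real.pi * shift ε = Real.pi + defect ε := by
  have hne : (2 - ε) ≠ 0 := by linarith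
  rw [shift, defect]
  field_simp
  ring

lemma energyCoeff_one {ε : ℝ} (hε : ε < 2) : energyCoeff ε 1 = 1 - Real.cos (defect ε) := by
  rw [energyCoeff, two_pi_shift ε hε, Nat.cast_one, mul_one, add_comm Real.pi, Real.cos_add_pi]
  ring

lemma energyCoeff_two {ε : ℝ} (hε : ε < 2) : energyCoeff ε 2 = 1 + Real.cos (2 * defect ε) := by
  rw [energyCoeff, two_pi_shift ε hε,
    show (Real.pi + defect ε) * (2 : ℕ) = 2 * defect ε + 2 * Real.pi by push_cast; ring,
    Real.cos_add_two_pi]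

lemma energyCoeff_three {ε : ℝ} (hε : ε < 2) :
    energyCoeff ε 3 = 1 - Real.cos (3 * defect ε) := by
  rw [energyCoeff, two_pi_shift ε hε,
    show (Real.pi + defect ε) * (3 : ℕ) = 3 * defect ε + Real.pi + 2 * Real.pi by push_cast; ring,
    Real.cos_add_two_pi, Real.cos_add_pi]
  ring

lemma energyCoeff_five {ε : ℝ} (hε : ε < 2) :
    energyCoeff ε 5 = 1 - Real.cos (5 * defect ε) := by
  rw [energyCoeff, two_pi_shift ε hε,
    show (Real.pi + defect ε) * (5 : ℕ) =
      5 * defect ε + Real.pi + 2 * Real.pi + 2 * Real.pi by push_cast; ring,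
    Real.cos_add_two_pi, Real.cos_add_two_pi, Real.cos_add_pi]
  ring

lemma defect_bounds {ε : ℝ} (h0 : 0 < ε) (h1 : ε ≤ 1 / 10) :
    0 < defect ε ∧ Real.pi * ε / 2 ≤ defect ε ∧ defect ε ≤ 17 / 10 * ε := by
  have hpi := Real.pi_pos
  have hpi' := Real.pi_lt_d2
  have h2 : 0 < 2 - ε := by linarith
  refine ⟨by rw [defect]; positivity, ?_, ?_⟩
  · rw [defect]
    gcongr
    linarith
  · rw [defect, div_le_iff₀ h2]
    nlinarith

lemma admissible_energyCoeff {ε : ℝ} (h0 : 0 < ε) (h1 : ε ≤ 1 / 10) :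
    AdmissibleCoeffs (energyCoeff ε) := by
  obtain ⟨hd0, -, hd⟩ := defect_bounds h0 h1
  have h2 : ε < 2 := by linarith
  have hpi := Real.pi_gt_three
  have hpi4 := Real.pi_le_four
  have hd1 : defect ε ≤ 17 / 100 := by linarith
  have hlow : defect ε ^ 2 / 8 ≤ energyCoeff ε 1 := by
    have h := Real.cos_le_one_sub_mul_cos_sq (x := defect ε)
      (by rw [abs_of_pos hd0]; linarith)
    have h8 : 1 / 8 ≤ 2 / Real.pi ^ 2 := by
      rw [div_le_div_iff₀ (by norm_num) (by positivity)]
      nlinarith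
    rw [energyCoeff_one h2]
    nlinarith [sq_nonneg (defect ε)]
  refine ⟨fun n => ?_, fun n => ?_, ?_, ?_, ?_, ?_⟩
  · rw [energyCoeff]; linarith [Real.neg_one_le_cos (2 * Real.pi * shift ε * n)]
  · rw [energyCoeff]; linarith [Real.cos_le_one (2 * Real.pi * shift ε * n)]
  · exact lt_of_lt_of_le (by positivity) hlow
  · rw [energyCoeff_two h2]
    have := Real.one_sub_sq_div_two_le_cos (x := 2 * defect ε)
    nlinarith
  · rw [energyCoeff_three h2]
    have := Real.one_sub_sq_div_two_le_cos (x := 3 * defect ε)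
    nlinarith
  · rw [energyCoeff_five h2]
    have := Real.one_sub_sq_div_two_le_cos (x := 5 * defect ε)
    nlinarith

/-- The quantity `q = c 1 / c 2` for the coefficients of the energy; it equals
`(π ε / 4) ^ 2` up to a factor `1 + O(ε)`. -/
noncomputable def ratio (ε : ℝ) : ℝ := energyCoeff ε 1 / energyCoeff ε 2

lemma ratio_bounds {ε : ℝ} (h0 : 0 < ε) (h1 : ε ≤ 1 / 10) :
    0 < ratio ε ∧ ratio ε ≤ 8 * ε ^ 2 ∧ (Real.pi * ε / 4) ^ 2 * (1 - 2 * ε) ≤ ratio ε ∧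
      ratio ε * (1 - 2 * ε) ≤ (Real.pi * ε / 4) ^ 2 := by
  have hA := admissible_energyCoeff h0 h1
  obtain ⟨hd0, hdl, hd⟩ := defect_bounds h0 h1
  have h2 : ε < 2 := by linarith
  have c1 := hA.pos_one
  have c2 := hA.one_le_two
  have c2p : 0 < energyCoeff ε 2 := by linarith
  have hpi := Real.pi_gt_three
  have hd1 : defect ε ≤ 17 / 100 := by linarith
  have hd2 : defect ε ^ 2 ≤ 289 / 1000 * ε := by nlinarith
  have hc1 : energyCoeff ε 1 ≤ defect ε ^ 2 / 2 := by
    rw [energyCoeff_one h2]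
    linarith [Real.one_sub_sq_div_two_le_cos (x := defect ε)]
  have hc1' : defect ε ^ 2 / 2 * (1 - ε) ≤ energyCoeff ε 1 := by
    rw [energyCoeff_one h2]
    have h := (abs_le.1 (Real.cos_bound (x := defect ε) (by rw [abs_of_pos hd0]; linarith))).2
    rw [abs_of_pos hd0] at h
    nlinarith [sq_nonneg (defect ε)]
  have hc2 : 2 - 2 * defect ε ^ 2 ≤ energyCoeff ε 2 := by
    rw [energyCoeff_two h2]
    nlinarith [Real.one_sub_sq_div_two_le_cos (x := 2 * defect ε)]
  have hc2' := hA.le_two 2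
  refine ⟨div_pos c1 c2p, ?_, ?_, ?_⟩
  · calc ratio ε ≤ energyCoeff ε 1 := div_le_self c1.le c2
      _ ≤ 8 * ε ^ 2 := by nlinarith
  · rw [ratio, le_div_iff₀ c2p]
    have hsq : (Real.pi * ε / 2) ^ 2 ≤ defect ε ^ 2 := by gcongr
    calc (Real.pi * ε / 4) ^ 2 * (1 - 2 * ε) * energyCoeff ε 2
        ≤ (Real.pi * ε / 4) ^ 2 * (1 - 2 * ε) * 2 := by
          have : 0 ≤ 1 - 2 * ε := by linarith
          gcongr
      _ = (Real.pi * ε / 2) ^ 2 / 2 * (1 - 2 * ε) := by ring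
      _ ≤ defect ε ^ 2 / 2 * (1 - ε) := by
          have : 0 ≤ 1 - ε := by linarith
          exact mul_le_mul (by linarith) (by linarith) (by linarith) (by positivity)
      _ ≤ _ := hc1'
  · rw [ratio, div_mul_eq_mul_div, div_le_iff₀ c2p]
    have hdd : defect ε * (1 - ε / 2) = Real.pi * ε / 2 := by
      have : 2 - ε ≠ 0 := by linarith
      rw [defect]
      field_simp
    have hsq : (Real.pi * ε / 4) ^ 2 = defect ε ^ 2 / 4 * (1 - ε / 2) ^ 2 := by
      rw [show Real.pi * ε / 4 = defect ε * (1 - ε / 2) / 2 by rw [hdd]; ring]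
      ring
    have hfac : 1 - 2 * ε ≤ (1 - ε / 2) ^ 2 * (1 - defect ε ^ 2) := by nlinarith
    calc energyCoeff ε 1 * (1 - 2 * ε) ≤ defect ε ^ 2 / 2 * ((1 - ε / 2) ^ 2 * (1 - defect ε ^ 2)) := by
          have : 0 ≤ 1 - 2 * ε := by linarith
          gcongr
      _ = (Real.pi * ε / 4) ^ 2 * (2 - 2 * defect ε ^ 2) := by rw [hsq]; ring
      _ ≤ _ := by gcongr

lemma abs_log_ratio_sub_le {ε : ℝ} (h0 : 0 < ε) (h1 : ε ≤ 1 / 10) :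
    |Real.log (ratio ε) - (2 * Real.log ε + 2 * Real.log Real.pi - 4 * Real.log 2)| ≤ 4 * ε := by
  obtain ⟨hq, -, hl, hu⟩ := ratio_bounds h0 h1
  have hpi := Real.pi_pos
  have hQ : Real.log ((Real.pi * ε / 4) ^ 2) =
      2 * Real.log ε + 2 * Real.log Real.pi - 4 * Real.log 2 := by
    rw [Real.log_pow, Real.log_div (by positivity) (by norm_num), Real.log_mul hpi.ne' h0.ne',
      show (4 : ℝ) = 2 ^ 2 by norm_num, Real.log_pow]
    push_cast
    ring
  have hu0 : 0 < 1 - 2 * ε := by linarith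
  have hlog : -(4 * ε) ≤ Real.log (1 - 2 * ε) := by
    have := Real.one_sub_inv_le_log_of_pos hu0
    have h' : (1 - 2 * ε)⁻¹ ≤ 1 + 4 * ε := by
      rw [inv_le_iff_one_le_mul₀ hu0]
      nlinarith
    linarith
  have a := Real.log_le_log (by positivity) hl
  have b := Real.log_le_log (by positivity) hu
  rw [Real.log_mul (by positivity) hu0.ne'] at a b
  rw [← hQ, abs_le]
  constructor <;> linarith

/-! ### The zeros of the energy -/

/-- The pointwise form of the theorem: one zero for each small `ε`. The admissible range
`ε < 1 / (16 M)` makes `M q ≤ ε / 2`, by `q ≤ 8 ε ^ 2`. -/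
lemma exists_branch_point (k : ℤ) : ∃ ε₀ > (0 : ℝ), ε₀ ≤ 1 ∧ ∃ C > (0 : ℝ), ∀ ε ∈ Set.Ioo 0 ε₀,
    ∃ s : ℂ, latticeEnergy s (1 - ε) = 0 ∧
        |s.im - (2 * k + 1) * Real.pi / Real.log 2|
          ≤ C * ε ^ (2 * Real.log 3 / Real.log 2) ∧
        |s.re - (2 / Real.log 2) * Real.log ε
            - (-3 + (2 / Real.log 2) * Real.log Real.pi)| ≤ C * ε := by
  have hR0 : 600 ≤ remConst := by
    have := tailConst_nonneg
    rw [remConst]; linarith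
  have hl2 := Real.log_two_gt_d9
  have hl2p : 0 < Real.log 2 := by linarith
  have hl3 : 0 < Real.log 3 := Real.log_pos (by norm_num)
  set M := 17 * (8 + remConst) with hM
  set l := Real.log 3 / Real.log 2 with hl
  have hl0 : 0 < l := div_pos hl3 hl2p
  have hM0 : 10000 ≤ M := by rw [hM]; linarith
  have h8 : (0 : ℝ) < 8 ^ l := by positivity
  refine ⟨1 / (16 * M), by positivity, ?_, 16 * remConst * 8 ^ l + 7, by positivity, ?_⟩
  · rw [div_le_one (by positivity)]; linarith
  rintro ε ⟨h0, hε⟩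
  rw [lt_div_iff₀ (by positivity)] at hε
  have h1 : ε ≤ 1 / 10 := by nlinarith
  have hc := admissible_energyCoeff h0 h1
  obtain ⟨hq, hq8, -, -⟩ := ratio_bounds h0 h1
  have hMq : M * ratio ε ≤ ε / 2 := by nlinarith
  have hqM : ratio ε * (2 * M) ≤ 1 := by linarith
  obtain ⟨z, hz, hzero⟩ := exists_zero k hc (hasSum_cosZetaSum ε) (differentiableAt_cosZetaSum ε)
    (rfl : ratio ε = _) hq hqM
  have hz' : ‖z‖ ≤ ε / 2 := hz.trans hMq
  have hq16 : ratio ε ≤ 1 / 16 := by nlinarith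
  have him := abs_im_zero_le k hc (hasSum_cosZetaSum ε) (rfl : ratio ε = _) hq hq16
    (by linarith) hzero
  have hre := basePoint_add_re k hq (by linarith) (z := z) (by linarith)
  refine ⟨1 - (basePoint k (ratio ε) + z),
    latticeEnergy_one_sub_eq_zero (by linarith) (by linarith) hzero, ?_, ?_⟩
  · have e : (1 - (basePoint k (ratio ε) + z)).im - (2 * k + 1) * Real.pi / Real.log 2 = -z.im := by
      rw [Complex.sub_im, Complex.add_im, basePoint_im, Complex.one_im]
      ring
    rw [e, abs_neg]
    have hpow : ratio ε ^ l ≤ 8 ^ l * ε ^ (2 * Real.log 3 / Real.log 2) := by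
      calc ratio ε ^ l ≤ (8 * ε ^ 2) ^ l := Real.rpow_le_rpow hq.le hq8 hl0.le
        _ = 8 ^ l * ε ^ (2 * Real.log 3 / Real.log 2) := by
          rw [Real.mul_rpow (by norm_num) (by positivity), ← Real.rpow_natCast ε 2,
            ← Real.rpow_mul h0.le]
          congr 2
          rw [hl]; push_cast; ring
    have hp : 0 < ε ^ (2 * Real.log 3 / Real.log 2) := Real.rpow_pos_of_pos h0 _
    calc |z.im| ≤ 16 * remConst * ratio ε ^ l := him
      _ ≤ 16 * remConst * (8 ^ l * ε ^ (2 * Real.log 3 / Real.log 2)) := by gcongr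
      _ ≤ _ := by nlinarith
  · have hlog := abs_log_ratio_sub_le h0 h1
    set D := Real.log (ratio ε) - (2 * Real.log ε + 2 * Real.log Real.pi - 4 * Real.log 2) with hD
    have e : (1 - (basePoint k (ratio ε) + z)).re - (2 / Real.log 2) * Real.log ε
        - (-3 + (2 / Real.log 2) * Real.log Real.pi) = D / Real.log 2 - z.re := by
      rw [Complex.sub_re, Complex.add_re, basePoint_re, Complex.one_re, hD]
      field_simp
      ring
    have hx := (Complex.abs_re_le_norm z).trans hz'
    rw [e]
    have hD' : |D / Real.log 2| ≤ 6 * ε := by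
      rw [abs_div, abs_of_pos hl2p, div_le_iff₀ hl2p]
      nlinarith
    have hpos : 0 ≤ 16 * remConst * 8 ^ l * ε := by positivity
    calc _ ≤ |D / Real.log 2| + |z.re| := abs_sub _ _
      _ ≤ 7 * ε := by linarith
      _ ≤ _ := by linarith

/-- Existence and asymptotics of the off-critical zeros of
`E(·, 1−ε)` near the Riemann point: for each `k ∈ ℤ` there is a branch `ρ(ε)` of zeros
whose imaginary part is within `C ε^{2 ln 3/ln 2}` of `(2k+1)π/ln 2` and whose real part is
within `C ε` of `(2/ln 2) ln ε + (−3 + (2/ln 2) ln π)`; in particular `Re ρ(ε) → −∞` and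
`Im ρ(ε) → (2k+1)π/ln 2` as `ε → 0⁺`. -/
theorem offcritical_zeros_asymptotics (k : ℤ) :
    ∃ ε₀ > (0 : ℝ), ∃ C > (0 : ℝ), ∃ ρ : ℝ → ℂ,
      (∀ ε : ℝ, ε ∈ Set.Ioo 0 ε₀ →
        latticeEnergy (ρ ε) (1 - ε) = 0 ∧
        |(ρ ε).im - (2 * k + 1) * Real.pi / Real.log 2|
          ≤ C * ε ^ (2 * Real.log 3 / Real.log 2) ∧
        |(ρ ε).re - (2 / Real.log 2) * Real.log ε
            - (-3 + (2 / Real.log 2) * Real.log Real.pi)| ≤ C * ε) ∧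
      Tendsto (fun ε : ℝ => (ρ ε).re) (nhdsWithin 0 (Set.Ioi 0)) atBot ∧
      Tendsto (fun ε : ℝ => (ρ ε).im) (nhdsWithin 0 (Set.Ioi 0))
        (nhds ((2 * k + 1) * Real.pi / Real.log 2)) := by
  obtain ⟨ε₀, hε₀, hε1, C, hC, h⟩ := exists_branch_point k
  have h' : ∀ ε : ℝ, ∃ s : ℂ, ε ∈ Set.Ioo 0 ε₀ → latticeEnergy s (1 - ε) = 0 ∧
        |s.im - (2 * k + 1) * Real.pi / Real.log 2|
          ≤ C * ε ^ (2 * Real.log 3 / Real.log 2) ∧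
        |s.re - (2 / Real.log 2) * Real.log ε
            - (-3 + (2 / Real.log 2) * Real.log Real.pi)| ≤ C * ε := by
    intro ε
    by_cases hε : ε ∈ Set.Ioo 0 ε₀
    · obtain ⟨s, hs⟩ := h ε hε
      exact ⟨s, fun _ => hs⟩
    · exact ⟨0, fun hh => absurd hh hε⟩
  choose ρ hρ using h'
  have hev : ∀ᶠ ε in nhdsWithin (0 : ℝ) (Set.Ioi 0), ε ∈ Set.Ioo 0 ε₀ := Ioo_mem_nhdsGT hε₀
  have hl2 : 0 < Real.log 2 := Real.log_pos one_lt_two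
  have hl3 : 0 < Real.log 3 := Real.log_pos (by norm_num)
  refine ⟨ε₀, hε₀, C, hC, ρ, hρ, ?_, ?_⟩
  · have hlim : Tendsto (fun ε : ℝ => (2 / Real.log 2) * Real.log ε +
        (-3 + (2 / Real.log 2) * Real.log Real.pi + C)) (nhdsWithin 0 (Set.Ioi 0)) atBot :=
      tendsto_atBot_add_const_right _ _
        (Real.tendsto_log_nhdsGT_zero.const_mul_atBot (by positivity))
    refine tendsto_atBot_mono' _ ?_ hlim
    filter_upwards [hev] with ε hε
    have h3 := (abs_le.1 (hρ ε hε).2.2).2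
    have : C * ε ≤ C := mul_le_of_le_one_right hC.le (by linarith [hε.2])
    linarith
  · have hlim : Tendsto (fun ε : ℝ => C * ε ^ (2 * Real.log 3 / Real.log 2))
        (nhdsWithin 0 (Set.Ioi 0)) (nhds 0) := by
      have hp : 0 < 2 * Real.log 3 / Real.log 2 := by positivity
      have hcont := (Real.continuousAt_rpow_const 0 _ (Or.inr hp.le)).tendsto
      rw [Real.zero_rpow hp.ne'] at hcont
      simpa using (hcont.mono_left nhdsWithin_le_nhds).const_mul C
    rw [tendsto_iff_dist_tendsto_zero]
    refine squeeze_zero' (Eventually.of_forall fun _ => dist_nonneg) ?_ hlim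
    filter_upwards [hev] with ε hε
    exact (hρ ε hε).2.1
end

section
/- Minimality of the Riemann zeta function among alternating lattice energies: for every real s > 1 and every Δ ∈ (0,1], one has E(s,Δ) := 2^{−s} ζ(s) + 2^{−(s+1)} [ ζ(s, 1/(1+Δ)) + ζ(s, Δ/(1+Δ)) ] ≥ ζ(s), with equality if and only if Δ = 1. -/
/-!
Splitting the series of `ζ(s)` into even and odd integers gives
`ζ(s) = 2^{-s} ζ(s) + 2^{-s} ζ(s, 1/2)`, which is the value of the energy at `Δ = 1`. Since
`1/(1+Δ) + Δ/(1+Δ) = 1`, it remains to show that `ζ(s, a) + ζ(s, b) > 2 ζ(s, 1/2)` when `a ≠ b` are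
positive with `a + b = 1`. This holds term by term, because `x ↦ x^{-s}` is strictly midpoint convex
on the positive reals (`two_mul_rpow_neg_midpoint_lt`).
-/

/-- Strict midpoint convexity of `x ↦ x^{-s}`. With `u = x^{-s/2}` and `v = y^{-s/2}` it follows
from `2uv ≤ u² + v²` together with `xy < ((x+y)/2)²`. -/
lemma two_mul_rpow_neg_midpoint_lt {s x y : ℝ} (hs : 0 < s) (hx : 0 < x) (hy : 0 < y)
    (hxy : x ≠ y) : 2 * ((x + y) / 2) ^ (-s) < x ^ (-s) + y ^ (-s) := by
  have hsq : ∀ z : ℝ, 0 < z → z ^ (-s) = (z ^ (-s / 2)) ^ 2 := fun z hz => by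
    rw [← Real.rpow_natCast, ← Real.rpow_mul hz.le]
    congr 1
    push_cast
    ring
  have hm : 0 < (x + y) / 2 := by positivity
  have hlt : ((x + y) / 2) ^ (-s) < x ^ (-s / 2) * y ^ (-s / 2) := by
    rw [hsq _ hm, sq, ← Real.mul_rpow hm.le hm.le, ← Real.mul_rpow hx.le hy.le]
    refine Real.rpow_lt_rpow_of_neg (by positivity) ?_ (by linarith)
    nlinarith [sq_pos_of_ne_zero (sub_ne_zero.2 hxy)]
  rw [hsq x hx, hsq y hy]
  nlinarith [sq_nonneg (x ^ (-s / 2) - y ^ (-s / 2))]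

lemma summable_nat_add_rpow_neg {s a : ℝ} (hs : 1 < s) (ha : 0 < a) :
    Summable fun n : ℕ => ((n : ℝ) + a) ^ (-s) := by
  refine ((Real.summable_one_div_nat_add_rpow a s).2 hs).congr fun n => ?_
  have hn : 0 < (n : ℝ) + a := by positivity
  rw [abs_of_pos hn, Real.rpow_neg hn.le, one_div]

lemma tsum_eq_half_add_tsum_one {s : ℝ} (hs : 1 < s) :
    ∑' n : ℕ, ((n : ℝ) + 1) ^ (-s) = 2 ^ (-s) * (∑' n : ℕ, ((n : ℝ) + 1 / 2) ^ (-s))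
      + 2 ^ (-s) * ∑' n : ℕ, ((n : ℝ) + 1) ^ (-s) := by
  have he : ∀ k : ℕ, (((2 * k : ℕ) : ℝ) + 1) ^ (-s) = 2 ^ (-s) * ((k : ℝ) + 1 / 2) ^ (-s) :=
    fun k => by
      rw [← Real.mul_rpow (by norm_num) (by positivity)]
      push_cast
      ring_nf
  have ho : ∀ k : ℕ, (((2 * k + 1 : ℕ) : ℝ) + 1) ^ (-s) = 2 ^ (-s) * ((k : ℝ) + 1) ^ (-s) :=
    fun k => by
      rw [← Real.mul_rpow (by norm_num) (by positivity)]
      push_cast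
      ring_nf
  have h := tsum_even_add_odd (f := fun n : ℕ => ((n : ℝ) + 1) ^ (-s))
    (by simpa only [he] using (summable_nat_add_rpow_neg hs one_half_pos).mul_left _)
    (by simpa only [ho] using (summable_nat_add_rpow_neg hs one_pos).mul_left _)
  simp only [he, ho, tsum_mul_left] at h
  exact h.symm

lemma two_mul_tsum_half_lt {s a b : ℝ} (hs : 1 < s) (ha : 0 < a) (hb : 0 < b) (hab : a + b = 1)
    (hne : a ≠ b) : 2 * (∑' n : ℕ, ((n : ℝ) + 1 / 2) ^ (-s)) <
      (∑' n : ℕ, ((n : ℝ) + a) ^ (-s)) + ∑' n : ℕ, ((n : ℝ) + b) ^ (-s) := by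
  have hsa := summable_nat_add_rpow_neg hs ha
  have hsb := summable_nat_add_rpow_neg hs hb
  have key : ∀ n : ℕ, 2 * ((n : ℝ) + 1 / 2) ^ (-s) < ((n : ℝ) + a) ^ (-s) + ((n : ℝ) + b) ^ (-s) :=
    fun n => by
      have h := two_mul_rpow_neg_midpoint_lt (s := s) (x := n + a) (y := n + b) (by linarith)
        (by positivity) (by positivity) (fun h => hne (by linarith))
      rwa [show ((n : ℝ) + a + (n + b)) / 2 = n + 1 / 2 by linarith] at h
  rw [← tsum_mul_left, ← hsa.tsum_add hsb]
  exact Summable.tsum_lt_tsum (i := 0) (fun n => (key n).le) (key 0)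
    ((summable_nat_add_rpow_neg hs one_half_pos).mul_left 2) (hsa.add hsb)


/-- Minimality of the Riemann zeta function among alternating lattice
energies: for every real `s > 1` and `Δ ∈ (0,1]`,
`E(s,Δ) = 2^{−s} ζ(s) + 2^{−(s+1)} [ζ(s, 1/(1+Δ)) + ζ(s, Δ/(1+Δ))] ≥ ζ(s)`,
with equality if and only if `Δ = 1`. Here the zeta functions are given by their
defining series. -/
theorem latticeEnergy_ge_zeta (s : ℝ) (hs : 1 < s) (Δ : ℝ) (hΔ : Δ ∈ Set.Ioc (0 : ℝ) 1) :
    (2 : ℝ) ^ (-s) * (∑' n : ℕ, ((n : ℝ) + 1) ^ (-s))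
        + 2 ^ (-(s + 1)) * ((∑' n : ℕ, ((n : ℝ) + 1 / (1 + Δ)) ^ (-s))
          + ∑' n : ℕ, ((n : ℝ) + Δ / (1 + Δ)) ^ (-s))
      ≥ ∑' n : ℕ, ((n : ℝ) + 1) ^ (-s) ∧
    ((2 : ℝ) ^ (-s) * (∑' n : ℕ, ((n : ℝ) + 1) ^ (-s))
        + 2 ^ (-(s + 1)) * ((∑' n : ℕ, ((n : ℝ) + 1 / (1 + Δ)) ^ (-s))
          + ∑' n : ℕ, ((n : ℝ) + Δ / (1 + Δ)) ^ (-s))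
      = ∑' n : ℕ, ((n : ℝ) + 1) ^ (-s) ↔ Δ = 1) := by
  obtain ⟨h0, -⟩ := hΔ
  have hz := tsum_eq_half_add_tsum_one hs
  have hpow : (2 : ℝ) ^ (-(s + 1)) = 2 ^ (-s) / 2 := by
    rw [neg_add, ← sub_eq_add_neg, Real.rpow_sub_one (by norm_num)]
  have hp : (0 : ℝ) < 2 ^ (-s) := by positivity
  rw [hpow]
  by_cases h1 : Δ = 1
  · subst h1
    rw [one_add_one_eq_two]
    have heq : (2 : ℝ) ^ (-s) * (∑' n : ℕ, ((n : ℝ) + 1) ^ (-s))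
        + 2 ^ (-s) / 2 * ((∑' n : ℕ, ((n : ℝ) + 1 / 2) ^ (-s))
          + ∑' n : ℕ, ((n : ℝ) + 1 / 2) ^ (-s)) = ∑' n : ℕ, ((n : ℝ) + 1) ^ (-s) := by
      linarith
    exact ⟨heq.ge, iff_of_true heq rfl⟩
  · have hlt := two_mul_tsum_half_lt (s := s) (a := 1 / (1 + Δ)) (b := Δ / (1 + Δ)) hs
      (by positivity) (by positivity) (by field_simp) (fun h => h1 (by field_simp at h; exact h.symm))
    have hlt' := mul_lt_mul_of_pos_left hlt (half_pos hp)
    have hgt : ∑' n : ℕ, ((n : ℝ) + 1) ^ (-s) < (2 : ℝ) ^ (-s) * (∑' n : ℕ, ((n : ℝ) + 1) ^ (-s))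
        + 2 ^ (-s) / 2 * ((∑' n : ℕ, ((n : ℝ) + 1 / (1 + Δ)) ^ (-s))
          + ∑' n : ℕ, ((n : ℝ) + Δ / (1 + Δ)) ^ (-s)) := by
      linarith
    exact ⟨hgt.le, iff_of_false hgt.ne' h1⟩
end
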